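/- arXiv:math/0005057 — 6 statements merged into one kernel-verified Lean document; each statement's English description precedes it below -/
import Mathlib

section
/- The relative spin lift ads_𝔭 restricted to 𝔥 is a spin representation of 𝔥 on Cl(𝔤): for all Z, W ∈ 𝔥 and all Y ∈ 𝔭 one has ads_𝔭(Z)·ι(Y) − ι(Y)·ads_𝔭(Z) = ι([Z,Y]) and ads_𝔭(Z)·ads_𝔭(W) − ads_𝔭(W)·ads_𝔭(Z) = ads_𝔭([Z,W]). -/
open CliffordAlgebra

/-!
In `Cl(𝔤)` one has `[ι a · ι b, ι y] = 2 B(b, y) ι a - 2 B(a, y) ι b`. Summing over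
`a = Y*ᵢ`, `b = [Z, Yᵢ]`, each of the two terms contributes `½ ι [Z, Y]`: one by expanding in the
basis `(Yᵢ)`, the other by skewness of `ad Z` and expanding in the dual basis `(Y*ᵢ)`.

For the second identity, `[ads_𝔭 Z, ·]` is a derivation, so by the first identity it acts on
`ads_𝔭 W = -¼ Σ ι(Y*ᵢ) ι([W, Yᵢ])` through `ad Z` on both factors. Since the tensor `Σ Y*ᵢ ⊗ Yᵢ` is
`ad Z`-invariant (`casimir_invariant`), `Σ ι([Z, Y*ᵢ]) ι([W, Yᵢ]) = -Σ ι(Y*ᵢ) ι([W, [Z, Yᵢ]])`,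
and the Jacobi identity concludes.
-/

/-- Commutator of a quadratic element with a vector in the Clifford algebra. -/
lemma quadratic_comm_vector {k g : Type*} [Field k] [AddCommGroup g] [Module k g]
    {Q : QuadraticForm k g} (B : LinearMap.BilinForm k g)
    (hB : ∀ a b : g, ι Q a * ι Q b + ι Q b * ι Q a = algebraMap k _ (2 * B a b)) (a b y : g) :
    ι Q a * ι Q b * ι Q y - ι Q y * (ι Q a * ι Q b)
      = ι Q ((2 * B b y) • a - (2 * B a y) • b) := by
  have h1 := hB b y
  have h2 := hB a y
  calc ι Q a * ι Q b * ι Q y - ι Q y * (ι Q a * ι Q b)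
      = ι Q a * (ι Q b * ι Q y + ι Q y * ι Q b)
        - (ι Q a * ι Q y + ι Q y * ι Q a) * ι Q b := by noncomm_ring
    _ = _ := by
      rw [h1, h2, ← Algebra.commutes, ← Algebra.smul_def, ← Algebra.smul_def, map_sub,
        map_smul, map_smul]

/-- Invariance of the Casimir tensor `Σ Y*ᵢ ⊗ Yᵢ` under an operator `D` that is skew on the given
families and whose values on them expand in the respective families, tested against a pair of linear
maps `G`, `F` into an algebra. -/
lemma casimir_invariant {k g A I : Type*} [Field k] [AddCommGroup g] [Module k g]
    [Ring A] [Algebra k A] [Fintype I] (B : LinearMap.BilinForm k g) (D : g →ₗ[k] g)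
    (e d : I → g) (hskew : ∀ i j, B (e j) (D (d i)) = - B (d i) (D (e j)))
    (he : ∀ j, ∑ i, B (d i) (D (e j)) • e i = D (e j))
    (hd : ∀ i, ∑ j, B (e j) (D (d i)) • d j = D (d i))
    (G F : g →ₗ[k] A) :
    ∑ i, G (D (d i)) * F (e i) = - ∑ i, G (d i) * F (D (e i)) := by
  have h1 : ∀ i, G (D (d i)) * F (e i) = ∑ j, - (B (d i) (D (e j)) • (G (d j) * F (e i))) := by
    intro i
    conv_lhs => rw [← hd i]
    simp only [map_sum, map_smul, Finset.sum_mul, hskew, smul_mul_assoc, neg_smul, map_neg, neg_mul]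
  have h2 : ∀ j, G (d j) * F (D (e j)) = ∑ i, B (d i) (D (e j)) • (G (d j) * F (e i)) := by
    intro j
    conv_lhs => rw [← he j]
    simp only [map_sum, map_smul, Finset.mul_sum, mul_smul_comm]
  simp only [h1, h2]
  rw [Finset.sum_comm]
  simp only [Finset.sum_neg_distrib]

/-- The relative spin lift `ads_𝔭(X) = -(1/4) Σᵢ ι(Y*ᵢ) ι(π_𝔭 [X, Yᵢ])`, restricted to the
subalgebra `𝔥`, is a spin representation of `𝔥` on `Cl(𝔤)`: for all `Z, W ∈ 𝔥` and `Y ∈ 𝔭`,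
`ads_𝔭 Z · ι Y - ι Y · ads_𝔭 Z = ι ⁅Z, Y⁆` and
`ads_𝔭 Z · ads_𝔭 W - ads_𝔭 W · ads_𝔭 Z = ads_𝔭 ⁅Z, W⁆`. -/
theorem ads_p_is_spin_rep
    {k : Type*} [Field k] [CharZero k]
    {g : Type*} [LieRing g] [LieAlgebra k g]
    (B : LinearMap.BilinForm k g)
    (hsymm : ∀ X Y : g, B X Y = B Y X)
    (hnondeg : B.Nondegenerate)
    (hinv : ∀ X Y Z : g, B ⁅X, Y⁆ Z = B X ⁅Y, Z⁆)
    (H : LieSubalgebra k g) (P : Submodule k g)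
    (hHnd : ∀ Z ∈ H, (∀ W ∈ H, B Z W = 0) → Z = 0)
    (hP : P = B.orthogonal H.toSubmodule)
    (hcompl : IsCompl H.toSubmodule P)
    (pp : g →ₗ[k] g)
    (hpp_mem : ∀ X : g, pp X ∈ P)
    (hpp_P : ∀ Y ∈ P, pp Y = Y)
    (hpp_H : ∀ Z ∈ H, pp Z = 0)
    {I : Type*} [Fintype I] [DecidableEq I]
    (bp : I → g) (hbp : ∀ i, bp i ∈ P)
    (bpd : I → g) (hbpd : ∀ i, bpd i ∈ P)
    (hbp_indep : LinearIndependent k bp)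
    (hbp_span : Submodule.span k (Set.range bp) = P)
    (hdualp : ∀ i j, B (bpd i) (bp j) = if i = j then 1 else 0)
    (Q : QuadraticForm k g) (hQ : ∀ X : g, Q X = B X X)
    (adsp : g → CliffordAlgebra Q)
    (hadsp : ∀ X : g, adsp X = (-(1/4 : k)) • ∑ i, ι Q (bpd i) * ι Q (pp ⁅X, bp i⁆)) :
    ∀ Z ∈ H, ∀ W ∈ H, ∀ Y ∈ P,
      (adsp Z * ι Q Y - ι Q Y * adsp Z = ι Q ⁅Z, Y⁆) ∧
      (adsp Z * adsp W - adsp W * adsp Z = adsp ⁅Z, W⁆) := by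
  have hB : ∀ a b : g, ι Q a * ι Q b + ι Q b * ι Q a = algebraMap k _ (2 * B a b) := by
    intro a b
    rw [ι_mul_ι_add_swap]
    congr 1
    simp only [QuadraticMap.polar, hQ, map_add, LinearMap.add_apply, hsymm b a]
    ring
  have hskew : ∀ Z a b : g, B ⁅Z, a⁆ b = - B a ⁅Z, b⁆ := by
    intro Z a b
    rw [← lie_skew, map_neg, LinearMap.neg_apply, hinv]
  have horth : ∀ Y ∈ P, ∀ Z ∈ H, B Z Y = 0 := by
    intro Y hY Z hZ
    rw [hP] at hY
    exact hY Z hZ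
  have hHP : ∀ Z ∈ H, ∀ Y ∈ P, ⁅Z, Y⁆ ∈ P := by
    intro Z hZ Y hY
    rw [hP]
    intro W hW
    change B W ⁅Z, Y⁆ = 0
    rw [← hinv]
    exact horth Y hY _ (H.lie_mem hW hZ)
  have exp1 : ∀ y ∈ P, ∑ i, B (bpd i) y • bp i = y := by
    intro y hy
    rw [← hbp_span] at hy
    induction hy using Submodule.span_induction with
    | mem x hx =>
      obtain ⟨j, rfl⟩ := hx
      simp [hdualp]
    | zero => simp
    | add x y _ _ hx hy => simp only [map_add, add_smul, Finset.sum_add_distrib, hx, hy]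
    | smul c x _ hx => simp only [map_smul, smul_assoc, ← Finset.smul_sum, hx]
  have exp2 : ∀ u ∈ P, ∑ i, B (bp i) u • bpd i = u := by
    intro u hu
    have hdP : ∑ i, B (bp i) u • bpd i - u ∈ P :=
      P.sub_mem (P.sum_mem fun i _ => P.smul_mem _ (hbpd i)) hu
    -- The difference is orthogonal to `𝔭` (tested on the basis) and to `𝔥`, hence to all of `𝔤`.
    have hdP0 : ∀ y ∈ P, B (∑ i, B (bp i) u • bpd i - u) y = 0 := by
      intro y hy
      rw [← hbp_span] at hy
      induction hy using Submodule.span_induction with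
      | mem x hx =>
        obtain ⟨j, rfl⟩ := hx
        simp [hdualp, hsymm u]
      | zero => simp
      | add x y _ _ hx hy => rw [map_add, hx, hy, add_zero]
      | smul c x _ hx => rw [map_smul, hx, smul_zero]
    refine sub_eq_zero.mp (hnondeg.1 _ fun y => ?_)
    have hy : y ∈ H.toSubmodule ⊔ P := by rw [hcompl.sup_eq_top]; trivial
    obtain ⟨z, hz, p, hp, rfl⟩ := Submodule.mem_sup.mp hy
    rw [map_add, hdP0 p hp, hsymm _ z, horth _ hdP z hz, add_zero]
  have hads : ∀ Z ∈ H, adsp Z = (-(1/4 : k)) • ∑ i, ι Q (bpd i) * ι Q ⁅Z, bp i⁆ := by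
    intro Z hZ
    rw [hadsp]
    congr 1
    exact Finset.sum_congr rfl fun i _ => by rw [hpp_P _ (hHP Z hZ _ (hbp i))]
  have key : ∀ Z ∈ H, ∀ Y ∈ P, adsp Z * ι Q Y - ι Q Y * adsp Z = ι Q ⁅Z, Y⁆ := by
    intro Z hZ Y hY
    rw [hads Z hZ, smul_mul_assoc, mul_smul_comm, ← smul_sub, Finset.sum_mul, Finset.mul_sum,
      ← Finset.sum_sub_distrib]
    simp only [quadratic_comm_vector B hB]
    rw [← map_sum, ← map_smul]
    congr 1
    have e1 : ∑ i, B (bpd i) Y • ⁅Z, bp i⁆ = ⁅Z, Y⁆ := by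
      conv_rhs => rw [← exp1 Y hY]
      simp only [lie_sum, lie_smul]
    have e2 := exp2 _ (hHP Z hZ Y hY)
    rw [Finset.sum_sub_distrib]
    simp only [hskew Z, mul_neg, neg_smul, Finset.sum_neg_distrib, mul_smul, ← Finset.smul_sum,
      e1, e2]
    module
  intro Z hZ W hW Y hY
  refine ⟨key Z hZ Y hY, ?_⟩
  have hder : ∀ i, adsp Z * (ι Q (bpd i) * ι Q ⁅W, bp i⁆) - (ι Q (bpd i) * ι Q ⁅W, bp i⁆) * adsp Z
      = ι Q ⁅Z, bpd i⁆ * ι Q ⁅W, bp i⁆ + ι Q (bpd i) * ι Q ⁅Z, ⁅W, bp i⁆⁆ := by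
    intro i
    rw [← key Z hZ _ (hbpd i), ← key Z hZ _ (hHP W hW _ (hbp i))]
    noncomm_ring
  have hcas : ∑ i, ι Q ⁅Z, bpd i⁆ * ι Q ⁅W, bp i⁆ = - ∑ i, ι Q (bpd i) * ι Q ⁅W, ⁅Z, bp i⁆⁆ :=
    casimir_invariant B (LieAlgebra.ad k g Z) bp bpd
      (fun i j => by
        change B (bp j) ⁅Z, bpd i⁆ = - B (bpd i) ⁅Z, bp j⁆
        rw [hsymm, hskew])
      (fun j => exp1 _ (hHP Z hZ _ (hbp j))) (fun i => exp2 _ (hHP Z hZ _ (hbpd i)))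
      (ι Q) (ι Q ∘ₗ (LieAlgebra.ad k g W))
  rw [hads W hW, hads _ (H.lie_mem hZ hW), mul_smul_comm, smul_mul_assoc, ← smul_sub,
    Finset.sum_mul, Finset.mul_sum, ← Finset.sum_sub_distrib]
  congr 1
  simp only [hder, lie_lie, map_sub, mul_sub, Finset.sum_add_distrib, Finset.sum_sub_distrib, hcas]
  abel
end

section
/- Decomposition of the cubic Dirac operator: in A = U(𝔤) ⊗ Cl(𝔤), the universal cubic Dirac operator of 𝔤 splits as D_𝔤 = D'_𝔥 + D_{𝔤/𝔥}, where D'_𝔥 is the twisted Dirac operator on 𝔥 and D_{𝔤/𝔥} is Kostant's cubic Dirac operator. -/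
/-!
The first-order terms of the two sides agree, so the claim is an identity between cubic elements of
the Clifford algebra: `2γ_𝔤 = 2γ_𝔥 + 2γ_𝔭 + ∑ Z*_a ads_𝔭(Z_a)`.

Put `T = ∑_{a,i} Z*_a Y*_i [Z_a, Y_i]`. The double sum defining `γ_𝔤` has four blocks.
The `𝔥𝔥` block is the sum defining `γ_𝔥`, and the `𝔥𝔭` block is `T`. The `𝔭𝔥` block is also `T`,
as orthogonal vectors anticommute in the Clifford algebra and the bracket is antisymmetric.
In the `𝔭𝔭` block, the `𝔭`-part of `[Y_i, Y_j]` gives the sum defining `γ_𝔭`. For the `𝔥`-part,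
`[Y_i, Y_j]_𝔥 = ∑_a B([Z_a, Y_i], Y_j) Z*_a` by invariance; summing over `j` turns the block into
`∑_{a,i} Y*_i [Z_a, Y_i] Z*_a`, which is again `T` after moving `Z*_a` past two vectors of `𝔭`.
The three copies of `T` contribute `2 · (-1/24) · 3 = -1/4`, the coefficient in `ads_𝔭`.
-/

/-- Expansion of a vector in the dual of a spanning family, for a nondegenerate form. -/
lemma eq_sum_dual {k g U : Type*} [Field k] [AddCommGroup g] [Module k g]
    [Fintype U] [DecidableEq U] (B : LinearMap.BilinForm k g) (hnondeg : B.Nondegenerate)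
    (x xd : U → g) (hdual : ∀ u v, B (xd u) (x v) = if u = v then 1 else 0)
    (hspan : Submodule.span k (Set.range x) = ⊤) (W : g) :
    W = ∑ u, B W (x u) • xd u := by
  rw [← sub_eq_zero]
  apply hnondeg.1
  intro Y
  have hY : Y ∈ Submodule.span k (Set.range x) := hspan ▸ Submodule.mem_top
  induction hY using Submodule.span_induction with
  | mem Y hY =>
    obtain ⟨v, rfl⟩ := hY
    simp [hdual]
  | zero => simp
  | add Y Y' _ _ h h' => rw [map_add, h, h', add_zero]
  | smul c Y _ h => rw [map_smul, h, smul_zero]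

open CliffordAlgebra TensorProduct

/-- Decomposition of the cubic Dirac operator: in `A = U(𝔤) ⊗ Cl(𝔤)` the universal cubic
Dirac operator of `𝔤` splits as `D_𝔤 = D'_𝔥 + D_{𝔤/𝔥}`, where `D'_𝔥` is the twisted Dirac
operator on `𝔥` and `D_{𝔤/𝔥}` is Kostant's cubic Dirac operator. -/
theorem dirac_decomposition
    {k : Type*} [Field k] [CharZero k]
    {g : Type*} [LieRing g] [LieAlgebra k g]
    (B : LinearMap.BilinForm k g)
    (hsymm : ∀ X Y : g, B X Y = B Y X)
    (hnondeg : B.Nondegenerate)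
    (hinv : ∀ X Y Z : g, B ⁅X, Y⁆ Z = B X ⁅Y, Z⁆)
    (H : LieSubalgebra k g) (P : Submodule k g)
    (hHnd : ∀ Z ∈ H, (∀ W ∈ H, B Z W = 0) → Z = 0)
    (hP : P = B.orthogonal H.toSubmodule)
    (hcompl : IsCompl H.toSubmodule P)
    (pp : g →ₗ[k] g)
    (hpp_mem : ∀ X : g, pp X ∈ P)
    (hpp_P : ∀ Y ∈ P, pp Y = Y)
    (hpp_H : ∀ Z ∈ H, pp Z = 0)
    {A' : Type*} [Fintype A'] [DecidableEq A']
    (bh : A' → g) (hbh : ∀ a, bh a ∈ H)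
    (bhd : A' → g) (hbhd : ∀ a, bhd a ∈ H)
    (hdualh : ∀ a c, B (bhd a) (bh c) = if a = c then 1 else 0)
    {I : Type*} [Fintype I] [DecidableEq I]
    (bp : I → g) (hbp : ∀ i, bp i ∈ P)
    (bpd : I → g) (hbpd : ∀ i, bpd i ∈ P)
    (hdualp : ∀ i j, B (bpd i) (bp j) = if i = j then 1 else 0)
    (hindep : LinearIndependent k (Sum.elim bh bp))
    (hspan : Submodule.span k (Set.range (Sum.elim bh bp)) = ⊤)
    (Q : QuadraticForm k g) (hQ : ∀ X : g, Q X = B X X)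
    (adsp : g → CliffordAlgebra Q)
    (hadsp : ∀ X : g, adsp X = (-(1/4 : k)) • ∑ i, ι Q (bpd i) * ι Q (pp ⁅X, bp i⁆))
    (γg γh γp : CliffordAlgebra Q)
    (hγg : γg = (-(1/24 : k)) • ∑ u : A' ⊕ I, ∑ v : A' ⊕ I,
        ι Q (Sum.elim bhd bpd u) * ι Q (Sum.elim bhd bpd v)
          * ι Q ⁅Sum.elim bh bp u, Sum.elim bh bp v⁆)
    (hγh : γh = (-(1/24 : k)) • ∑ a, ∑ c,
        ι Q (bhd a) * ι Q (bhd c) * ι Q ⁅bh a, bh c⁆)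
    (hγp : γp = (-(1/24 : k)) • ∑ i, ∑ j,
        ι Q (bpd i) * ι Q (bpd j) * ι Q (pp ⁅bp i, bp j⁆))
    (Dg Dh' Dgh : UniversalEnvelopingAlgebra k g ⊗[k] CliffordAlgebra Q)
    (hDg : Dg = (∑ a, UniversalEnvelopingAlgebra.ι k (bh a) ⊗ₜ[k] ι Q (bhd a))
              + (∑ i, UniversalEnvelopingAlgebra.ι k (bp i) ⊗ₜ[k] ι Q (bpd i))
              + (1 : UniversalEnvelopingAlgebra k g) ⊗ₜ[k] ((2 : k) • γg))
    (hDh' : Dh' = (∑ a, UniversalEnvelopingAlgebra.ι k (bh a) ⊗ₜ[k] ι Q (bhd a))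
              + (∑ a, (1 : UniversalEnvelopingAlgebra k g) ⊗ₜ[k] (ι Q (bhd a) * adsp (bh a)))
              + (1 : UniversalEnvelopingAlgebra k g) ⊗ₜ[k] ((2 : k) • γh))
    (hDgh : Dgh = (∑ i, UniversalEnvelopingAlgebra.ι k (bp i) ⊗ₜ[k] ι Q (bpd i))
              + (1 : UniversalEnvelopingAlgebra k g) ⊗ₜ[k] ((2 : k) • γp)) :
    Dg = Dh' + Dgh := by
  -- Orthogonality of the two summands and the consequent anticommutation in `Cl(𝔤)`.
  have horth : ∀ Z ∈ H, ∀ Y ∈ P, B Z Y = 0 := by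
    intro Z hZ Y hY
    rw [hP] at hY
    exact hY Z hZ
  have horth' : ∀ Y ∈ P, ∀ Z ∈ H, B Y Z = 0 := fun Y hY Z hZ => by
    rw [hsymm, horth Z hZ Y hY]
  have hanti : ∀ Z ∈ H, ∀ Y ∈ P, ι Q Y * ι Q Z = -(ι Q Z * ι Q Y) := by
    intro Z hZ Y hY
    rw [eq_neg_iff_add_eq_zero, ι_mul_ι_add_swap]
    simp [QuadraticMap.polar, hQ, horth Z hZ Y hY, horth' Y hY Z hZ]
  have hHP : ∀ Z ∈ H, ∀ Y ∈ P, ⁅Z, Y⁆ ∈ P := by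
    intro Z hZ Y hY
    rw [hP]
    intro W hW
    change B W ⁅Z, Y⁆ = 0
    rw [← hinv]
    exact horth _ (H.lie_mem hW hZ) Y hY
  have hexp := eq_sum_dual B hnondeg (Sum.elim bh bp) (Sum.elim bhd bpd) (by
    rintro (a | i) (c | j)
    · simp [hdualh]
    · simp [horth _ (hbhd a) _ (hbp j)]
    · simp [horth' _ (hbpd i) _ (hbh c)]
    · simp [hdualp]) hspan
  simp only [Fintype.sum_sum_type, Sum.elim_inl, Sum.elim_inr] at hexp
  have hexpP : ∀ W ∈ P, ∑ j, B W (bp j) • bpd j = W := by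
    intro W hW
    conv_rhs => rw [hexp W]
    simp [horth' W hW _ (hbh _)]
  have hexpH : ∀ W : g, W = ∑ a, B W (bh a) • bhd a + pp W := by
    intro W
    have h1 : pp W = ∑ j, B W (bp j) • bpd j := by
      conv_lhs => rw [hexp W]
      simp [hpp_H _ (hbhd _), hpp_P _ (hbpd _)]
    rw [h1]
    exact hexp W
  set T : CliffordAlgebra Q :=
    ∑ a, ∑ i, ι Q (bhd a) * ι Q (bpd i) * ι Q ⁅bh a, bp i⁆ with hT
  have hads : ∑ a, ι Q (bhd a) * adsp (bh a) = (-(1/4 : k)) • T := by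
    simp only [hadsp, hT, hpp_P _ (hHP _ (hbh _) _ (hbp _)), mul_smul_comm, Finset.mul_sum,
      Finset.smul_sum, mul_assoc]
  have hph : ∑ i, ∑ a, ι Q (bpd i) * ι Q (bhd a) * ι Q ⁅bp i, bh a⁆ = T := by
    rw [Finset.sum_comm, hT]
    refine Finset.sum_congr rfl fun a _ => Finset.sum_congr rfl fun i _ => ?_
    rw [hanti _ (hbhd a) _ (hbpd i), ← lie_skew, map_neg, neg_mul_neg]
  have hpp : ∑ i, ∑ j, ι Q (bpd i) * ι Q (bpd j) * ι Q ⁅bp i, bp j⁆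
      = T + ∑ i, ∑ j, ι Q (bpd i) * ι Q (bpd j) * ι Q (pp ⁅bp i, bp j⁆) := by
    have hB : ∀ i j a, B ⁅bp i, bp j⁆ (bh a) = B ⁅bh a, bp i⁆ (bp j) := by
      intro i j a
      rw [hsymm, ← hinv]
    have hcontract : ∀ i, ∑ j, ι Q (bpd i) * ι Q (bpd j)
        * ι Q (∑ a, B ⁅bp i, bp j⁆ (bh a) • bhd a)
        = ∑ a, ι Q (bhd a) * ι Q (bpd i) * ι Q ⁅bh a, bp i⁆ := by
      intro i
      simp only [map_sum, map_smul, Finset.mul_sum, hB]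
      rw [Finset.sum_comm]
      refine Finset.sum_congr rfl fun a _ => ?_
      have hmem := hHP _ (hbh a) _ (hbp i)
      calc ∑ j, ι Q (bpd i) * ι Q (bpd j) * (B ⁅bh a, bp i⁆ (bp j) • ι Q (bhd a))
          = ι Q (bpd i) * ι Q (∑ j, B ⁅bh a, bp i⁆ (bp j) • bpd j) * ι Q (bhd a) := by
            simp only [map_sum, map_smul, Finset.mul_sum, Finset.sum_mul, mul_smul_comm,
              smul_mul_assoc]
        _ = ι Q (bhd a) * ι Q (bpd i) * ι Q ⁅bh a, bp i⁆ := by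
            rw [hexpP _ hmem, mul_assoc, hanti _ (hbhd a) _ hmem, mul_neg, ← mul_assoc,
              hanti _ (hbhd a) _ (hbpd i), neg_mul, neg_neg]
    rw [hT, Finset.sum_comm (s := (Finset.univ : Finset A')), ← Finset.sum_add_distrib]
    refine Finset.sum_congr rfl fun i _ => ?_
    rw [← hcontract i, ← Finset.sum_add_distrib]
    refine Finset.sum_congr rfl fun j _ => ?_
    rw [← mul_add, ← map_add, ← hexpH]
  have hcubic : (2 : k) • γg
      = ∑ a, ι Q (bhd a) * adsp (bh a) + (2 : k) • γh + (2 : k) • γp := by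
    rw [hads, hγg, hγh, hγp]
    simp only [Fintype.sum_sum_type, Sum.elim_inl, Sum.elim_inr, Finset.sum_add_distrib]
    rw [hph, hpp, ← hT]
    module
  rw [hDg, hDh', hDgh, hcubic, TensorProduct.tmul_add, TensorProduct.tmul_add,
    TensorProduct.tmul_sum]
  abel
end

section
/- Kostant's cubic Dirac operator D_{𝔤/𝔥} is basic with respect to 𝔥 in the contraction sense: for every Z ∈ 𝔥, (1 ⊗ ι(Z))·D_{𝔤/𝔥} + D_{𝔤/𝔥}·(1 ⊗ ι(Z)) = 0 in A = U(𝔤) ⊗ Cl(𝔤). -/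
/-!
Since `𝔭` is `B`-orthogonal to `𝔥`, `ι Z` anticommutes with `ι Y` for all `Z ∈ 𝔥`, `Y ∈ 𝔭`.
Every term of the Dirac operator has as its Clifford factor a product of one or three elements
`ι Y` with `Y ∈ 𝔭`; such odd products still anticommute with `ι Z`
(`mul_three_eq_neg_of_anticomm`), and `1 ⊗ ι Z` does not interact with the `U(𝔤)` factors.
-/


open CliffordAlgebra TensorProduct

theorem mul_three_eq_neg_of_anticomm {R : Type*} [Ring R] {z a b c : R}
    (ha : z * a = -(a * z)) (hb : z * b = -(b * z)) (hc : z * c = -(c * z)) :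
    z * (a * b * c) = -(a * b * c * z) := by
  simp only [← mul_assoc, ha, neg_mul, mul_assoc a z b, hb, mul_neg, neg_neg]
  simp only [mul_assoc, hc, mul_neg]

/-- Kostant's cubic Dirac operator `D_{𝔤/𝔥} = Σᵢ ιU(Yᵢ) ⊗ ι(Y*ᵢ) + 1 ⊗ 2γ_𝔭` is basic with
respect to `𝔥` in the contraction sense: for every `Z ∈ 𝔥`,
`(1 ⊗ ι Z) · D_{𝔤/𝔥} + D_{𝔤/𝔥} · (1 ⊗ ι Z) = 0` in `A = U(𝔤) ⊗ Cl(𝔤)`. -/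
theorem kostant_dirac_basic
    {k : Type*} [Field k] [CharZero k]
    {g : Type*} [LieRing g] [LieAlgebra k g]
    (B : LinearMap.BilinForm k g)
    (hsymm : ∀ X Y : g, B X Y = B Y X)
    (hnondeg : B.Nondegenerate)
    (hinv : ∀ X Y Z : g, B ⁅X, Y⁆ Z = B X ⁅Y, Z⁆)
    (H : LieSubalgebra k g) (P : Submodule k g)
    (hHnd : ∀ Z ∈ H, (∀ W ∈ H, B Z W = 0) → Z = 0)
    (hP : P = B.orthogonal H.toSubmodule)
    (hcompl : IsCompl H.toSubmodule P)
    (pp : g →ₗ[k] g)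
    (hpp_mem : ∀ X : g, pp X ∈ P)
    (hpp_P : ∀ Y ∈ P, pp Y = Y)
    (hpp_H : ∀ Z ∈ H, pp Z = 0)
    {I : Type*} [Fintype I] [DecidableEq I]
    (bp : I → g) (hbp : ∀ i, bp i ∈ P)
    (bpd : I → g) (hbpd : ∀ i, bpd i ∈ P)
    (hbp_indep : LinearIndependent k bp)
    (hbp_span : Submodule.span k (Set.range bp) = P)
    (hdualp : ∀ i j, B (bpd i) (bp j) = if i = j then 1 else 0)
    (Q : QuadraticForm k g) (hQ : ∀ X : g, Q X = B X X)
    (γp : CliffordAlgebra Q)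
    (hγp : γp = (-(1/24 : k)) • ∑ i, ∑ j,
        ι Q (bpd i) * ι Q (bpd j) * ι Q (pp ⁅bp i, bp j⁆))
    (Dgh : UniversalEnvelopingAlgebra k g ⊗[k] CliffordAlgebra Q)
    (hDgh : Dgh = (∑ i, UniversalEnvelopingAlgebra.ι k (bp i) ⊗ₜ[k] ι Q (bpd i))
              + (1 : UniversalEnvelopingAlgebra k g) ⊗ₜ[k] ((2 : k) • γp)) :
    ∀ Z ∈ H,
      ((1 : UniversalEnvelopingAlgebra k g) ⊗ₜ[k] ι Q Z) * Dgh
        + Dgh * ((1 : UniversalEnvelopingAlgebra k g) ⊗ₜ[k] ι Q Z) = 0 := by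
  intro Z hZ
  have anti : ∀ Y ∈ P, ι Q Z * ι Q Y = -(ι Q Y * ι Q Z) := by
    intro Y hY
    have hZY : B Z Y = 0 := by
      rw [hP] at hY
      exact hY Z hZ
    refine eq_neg_of_add_eq_zero_left (ι_mul_ι_add_swap_of_isOrtho ?_)
    rw [QuadraticMap.isOrtho_def]
    simp [hQ, hsymm Y Z, hZY]
  have hγ : ι Q Z * γp = -(γp * ι Q Z) := by
    rw [hγp, mul_smul_comm, smul_mul_assoc, ← smul_neg]
    simp only [Finset.mul_sum, Finset.sum_mul, ← Finset.sum_neg_distrib]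
    congr 1
    refine Finset.sum_congr rfl fun i _ => Finset.sum_congr rfl fun j _ => ?_
    exact mul_three_eq_neg_of_anticomm (anti _ (hbpd i)) (anti _ (hbpd j)) (anti _ (hpp_mem _))
  rw [hDgh]
  simp only [mul_add, add_mul, Finset.mul_sum, Finset.sum_mul,
    Algebra.TensorProduct.tmul_mul_tmul, one_mul, mul_one, mul_smul_comm, smul_mul_assoc, hγ,
    anti _ (hbpd _), TensorProduct.tmul_neg, smul_neg, Finset.sum_neg_distrib]
  abel
end

section
/- Kostant's cubic Dirac operator is 𝔥-equivariant: for every Z ∈ 𝔥, ρ(Z)·D_{𝔤/𝔥} = D_{𝔤/𝔥}·ρ(Z) in A = U(𝔤) ⊗ Cl(𝔤), where ρ(Z) = ιU(Z) ⊗ 1 + 1 ⊗ ads(Z) and ads is the spin lift of the adjoint action of 𝔤 built from the combined basis. -/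
open CliffordAlgebra TensorProduct

/-!
The proof rests on two facts.

* `spin_lift_comm`: the spin lift satisfies `[ads Z, ι w] = ι [Z, w]`. Indeed
  `[ι a * ι b, ι w] = 2 B(b, w) ι a - 2 B(a, w) ι b`; summing over `a = x*_u`, `b = [Z, x_u]`, moving
  `Z` across `B` by invariance and expanding in the dual bases gives `-4 ι [Z, w]`, which the
  prefactor `-1/4` normalises.
* `sum_dual_invariant`: if `V` is stable under `ad Z`, the canonical element `∑ Y_i ⊗ Y*_i` of
  `V ⊗ V` is killed by `ad Z`, tested here against an arbitrary bilinear map.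

Consequently `ρ(Z)` acts on `A` by commutators as the diagonal adjoint action. It kills
`∑ Y_i ⊗ Y*_i` by the second fact applied to `V = 𝔭`, and it kills `γ_𝔭` by the same fact applied in
each of the two indices of the double sum, since `π_𝔭` commutes with `ad Z` for `Z ∈ 𝔥`.
-/

/-- Invariance of the canonical element: for dual families `y`, `yd` expanding `[Z, y i]` and
`[Z, yd i]`, and `B` invariant, any bilinear expression in `y i, yd i` summed over `i` is
annihilated by `ad Z`. -/
lemma sum_dual_invariant {k g M I : Type*} [Field k] [LieRing g] [LieAlgebra k g]
    [AddCommGroup M] [Module k M] [Fintype I]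
    (B : LinearMap.BilinForm k g) (hsymm : ∀ X Y : g, B X Y = B Y X)
    (hinv : ∀ X Y Z : g, B ⁅X, Y⁆ Z = B X ⁅Y, Z⁆)
    (y yd : I → g) (Z : g)
    (h1 : ∀ i, ⁅Z, y i⁆ = ∑ j, B (yd j) ⁅Z, y i⁆ • y j)
    (h2 : ∀ i, ⁅Z, yd i⁆ = ∑ j, B (y j) ⁅Z, yd i⁆ • yd j)
    (f : g →ₗ[k] g →ₗ[k] M) :
    ∑ i, f ⁅Z, y i⁆ (yd i) + ∑ i, f (y i) ⁅Z, yd i⁆ = 0 := by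
  have e1 : ∑ i, f ⁅Z, y i⁆ (yd i) = ∑ i, ∑ j, B (yd j) ⁅Z, y i⁆ • f (y j) (yd i) := by
    refine Finset.sum_congr rfl fun i _ => ?_
    conv_lhs => rw [h1 i]
    simp [map_sum, LinearMap.sum_apply]
  have e2 : ∑ i, f (y i) ⁅Z, yd i⁆ = ∑ i, ∑ j, B (y j) ⁅Z, yd i⁆ • f (y i) (yd j) := by
    refine Finset.sum_congr rfl fun i _ => ?_
    conv_lhs => rw [h2 i]
    simp [map_sum]
  rw [e1, e2, Finset.sum_comm, ← Finset.sum_add_distrib]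
  refine Finset.sum_eq_zero fun i _ => ?_
  rw [← Finset.sum_add_distrib]
  refine Finset.sum_eq_zero fun j _ => ?_
  rw [← add_smul]
  have : B (y j) ⁅Z, yd i⁆ = - B (yd i) ⁅Z, y j⁆ := by
    rw [← hinv, ← lie_skew, map_neg, LinearMap.neg_apply, hsymm]
  rw [this, add_neg_cancel, zero_smul]

/-- The spin lift implements the adjoint action on generators of the Clifford algebra. -/
lemma spin_lift_comm {k g U : Type*} [Field k] [CharZero k] [LieRing g] [LieAlgebra k g]
    [Fintype U]
    (B : LinearMap.BilinForm k g) (hsymm : ∀ X Y : g, B X Y = B Y X)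
    (hinv : ∀ X Y Z : g, B ⁅X, Y⁆ Z = B X ⁅Y, Z⁆)
    (Q : QuadraticForm k g) (hQ : ∀ X : g, Q X = B X X)
    (x xd : U → g)
    (h1 : ∀ w, w = ∑ u, B (xd u) w • x u)
    (h2 : ∀ w, w = ∑ u, B (x u) w • xd u) (Z w : g) :
    ((-(1/4 : k)) • ∑ u, ι Q (xd u) * ι Q ⁅Z, x u⁆) * ι Q w
      = ι Q w * ((-(1/4 : k)) • ∑ u, ι Q (xd u) * ι Q ⁅Z, x u⁆) + ι Q ⁅Z, w⁆ := by
  have hpol : ∀ a b : g, ι Q a * ι Q b + ι Q b * ι Q a = algebraMap k _ (2 * B a b) := by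
    intro a b
    rw [ι_mul_ι_add_swap]
    congr 1
    simp only [QuadraticMap.polar, hQ, map_add, LinearMap.add_apply, hsymm b a]
    ring
  have hab : ∀ a b : g, ι Q a * ι Q b * ι Q w - ι Q w * (ι Q a * ι Q b)
      = (2 * B b w) • ι Q a - (2 * B a w) • ι Q b := by
    intro a b
    calc _ = ι Q a * (ι Q b * ι Q w + ι Q w * ι Q b)
            - (ι Q a * ι Q w + ι Q w * ι Q a) * ι Q b := by noncomm_ring
      _ = _ := by
        rw [hpol, hpol, ← Algebra.commutes, ← Algebra.smul_def, ← Algebra.smul_def]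
  have hS : (∑ u, ι Q (xd u) * ι Q ⁅Z, x u⁆) * ι Q w
      - ι Q w * (∑ u, ι Q (xd u) * ι Q ⁅Z, x u⁆) = (-4 : k) • ι Q ⁅Z, w⁆ := by
    rw [Finset.sum_mul, Finset.mul_sum, ← Finset.sum_sub_distrib]
    simp_rw [hab]
    rw [Finset.sum_sub_distrib]
    have a1 : ∑ u, (2 * B ⁅Z, x u⁆ w) • ι Q (xd u) = (-2 : k) • ι Q ⁅Z, w⁆ := by
      conv_rhs => rw [h2 ⁅Z, w⁆]
      simp only [map_sum, map_smul, Finset.smul_sum, smul_smul]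
      refine Finset.sum_congr rfl fun u _ => ?_
      rw [← lie_skew, map_neg, LinearMap.neg_apply, hinv]
      congr 1
      ring
    have a2 : ∑ u, (2 * B (xd u) w) • ι Q ⁅Z, x u⁆ = (2 : k) • ι Q ⁅Z, w⁆ := by
      conv_rhs => rw [h1 w]
      simp only [lie_sum, lie_smul, map_sum, map_smul, Finset.smul_sum, smul_smul]
    rw [a1, a2, ← sub_smul]
    norm_num
  rw [← sub_eq_iff_eq_add', smul_mul_assoc, mul_smul_comm, ← smul_sub, hS, smul_smul]
  norm_num

/-- Kostant's cubic Dirac operator is `𝔥`-equivariant: for every `Z ∈ 𝔥`,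
`ρ(Z) · D_{𝔤/𝔥} = D_{𝔤/𝔥} · ρ(Z)` in `A = U(𝔤) ⊗ Cl(𝔤)`, where
`ρ(Z) = ιU(Z) ⊗ 1 + 1 ⊗ ads Z` and `ads` is the spin lift of the adjoint action of `𝔤`
built from the combined basis. -/
theorem kostant_dirac_equivariant
    {k : Type*} [Field k] [CharZero k]
    {g : Type*} [LieRing g] [LieAlgebra k g]
    (B : LinearMap.BilinForm k g)
    (hsymm : ∀ X Y : g, B X Y = B Y X)
    (hnondeg : B.Nondegenerate)
    (hinv : ∀ X Y Z : g, B ⁅X, Y⁆ Z = B X ⁅Y, Z⁆)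
    (H : LieSubalgebra k g) (P : Submodule k g)
    (hHnd : ∀ Z ∈ H, (∀ W ∈ H, B Z W = 0) → Z = 0)
    (hP : P = B.orthogonal H.toSubmodule)
    (hcompl : IsCompl H.toSubmodule P)
    (pp : g →ₗ[k] g)
    (hpp_mem : ∀ X : g, pp X ∈ P)
    (hpp_P : ∀ Y ∈ P, pp Y = Y)
    (hpp_H : ∀ Z ∈ H, pp Z = 0)
    {A' : Type*} [Fintype A'] [DecidableEq A']
    (bh : A' → g) (hbh : ∀ a, bh a ∈ H)
    (bhd : A' → g) (hbhd : ∀ a, bhd a ∈ H)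
    (hdualh : ∀ a c, B (bhd a) (bh c) = if a = c then 1 else 0)
    {I : Type*} [Fintype I] [DecidableEq I]
    (bp : I → g) (hbp : ∀ i, bp i ∈ P)
    (bpd : I → g) (hbpd : ∀ i, bpd i ∈ P)
    (hdualp : ∀ i j, B (bpd i) (bp j) = if i = j then 1 else 0)
    (hindep : LinearIndependent k (Sum.elim bh bp))
    (hspan : Submodule.span k (Set.range (Sum.elim bh bp)) = ⊤)
    (Q : QuadraticForm k g) (hQ : ∀ X : g, Q X = B X X)
    (ads : g → CliffordAlgebra Q)
    (hads : ∀ X : g, ads X = (-(1/4 : k)) • ∑ u : A' ⊕ I,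
        ι Q (Sum.elim bhd bpd u) * ι Q ⁅X, Sum.elim bh bp u⁆)
    (γp : CliffordAlgebra Q)
    (hγp : γp = (-(1/24 : k)) • ∑ i, ∑ j,
        ι Q (bpd i) * ι Q (bpd j) * ι Q (pp ⁅bp i, bp j⁆))
    (Dgh : UniversalEnvelopingAlgebra k g ⊗[k] CliffordAlgebra Q)
    (hDgh : Dgh = (∑ i, UniversalEnvelopingAlgebra.ι k (bp i) ⊗ₜ[k] ι Q (bpd i))
              + (1 : UniversalEnvelopingAlgebra k g) ⊗ₜ[k] ((2 : k) • γp)) :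
    ∀ Z ∈ H,
      (UniversalEnvelopingAlgebra.ι k Z ⊗ₜ[k] (1 : CliffordAlgebra Q)
        + (1 : UniversalEnvelopingAlgebra k g) ⊗ₜ[k] ads Z) * Dgh
      = Dgh * (UniversalEnvelopingAlgebra.ι k Z ⊗ₜ[k] (1 : CliffordAlgebra Q)
        + (1 : UniversalEnvelopingAlgebra k g) ⊗ₜ[k] ads Z) := by
  intro Z hZ
  have horth : ∀ X ∈ H, ∀ Y ∈ P, B X Y = 0 := by
    intro X hX Y hY
    rw [hP] at hY
    exact hY X hX
  have hZP : ∀ Y ∈ P, ⁅Z, Y⁆ ∈ P := by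
    intro Y hY
    rw [hP]
    intro X hX
    change B X ⁅Z, Y⁆ = 0
    rw [← hinv]
    exact horth _ (H.lie_mem hX hZ) Y hY
  have hdual : ∀ u v, B (Sum.elim bhd bpd u) (Sum.elim bh bp v) = if u = v then 1 else 0 := by
    rintro (a | i) (c | j)
    · simp [hdualh]
    · simp [horth _ (hbhd a) _ (hbp j)]
    · simp [hsymm (bpd i), horth _ (hbh c) _ (hbpd i)]
    · simp [hdualp]
  have hx1 : ∀ w, w = ∑ u, B (Sum.elim bhd bpd u) w • Sum.elim bh bp u := by
    intro w
    have hw : w ∈ Submodule.span k (Set.range (Sum.elim bh bp)) := hspan ▸ Submodule.mem_top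
    obtain ⟨c, rfl⟩ := (Submodule.mem_span_range_iff_exists_fun k).1 hw
    refine Finset.sum_congr rfl fun u _ => ?_
    congr 1
    rw [map_sum]
    simp only [map_smul, hdual, smul_eq_mul, mul_ite, mul_one, mul_zero]
    simp
  have hx2 : ∀ w, w = ∑ u, B (Sum.elim bh bp u) w • Sum.elim bhd bpd u := by
    intro w
    rw [← sub_eq_zero]
    refine hnondeg.1 _ fun z => ?_
    rw [map_sub, LinearMap.sub_apply, sub_eq_zero]
    conv_lhs => rw [hx1 z]
    simp only [map_sum, map_smul, LinearMap.sum_apply, LinearMap.smul_apply, smul_eq_mul]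
    refine Finset.sum_congr rfl fun u _ => ?_
    rw [hsymm w, mul_comm]
  have hp1 : ∀ w ∈ P, w = ∑ j, B (bpd j) w • bp j := by
    intro w hw
    have h := hx1 w
    simpa [Fintype.sum_sum_type, horth _ (hbhd _) _ hw] using h
  have hp2 : ∀ w ∈ P, w = ∑ j, B (bp j) w • bpd j := by
    intro w hw
    have h := hx2 w
    simpa [Fintype.sum_sum_type, horth _ (hbh _) _ hw] using h
  have hppZ : ∀ w, ⁅Z, pp w⁆ = pp ⁅Z, w⁆ := by
    intro w
    obtain ⟨a, ha, b, hb, rfl⟩ := Submodule.mem_sup.1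
      ((hcompl.sup_eq_top ▸ Submodule.mem_top : w ∈ H.toSubmodule ⊔ P))
    rw [map_add, hpp_H a ha, hpp_P b hb, zero_add, lie_add, map_add,
      hpp_H _ (H.lie_mem hZ ha), hpp_P _ (hZP b hb), zero_add]
  have hcomm : ∀ w, ads Z * ι Q w = ι Q w * ads Z + ι Q ⁅Z, w⁆ := by
    intro w
    rw [hads]
    exact spin_lift_comm B hsymm hinv Q hQ _ _ hx1 hx2 Z w
  have key : ∀ {M : Type _} [AddCommGroup M] [Module k M] (f : g →ₗ[k] g →ₗ[k] M),
      ∑ i, f ⁅Z, bp i⁆ (bpd i) + ∑ i, f (bp i) ⁅Z, bpd i⁆ = 0 := fun f =>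
    sum_dual_invariant B hsymm hinv bp bpd Z (fun i => hp1 _ (hZP _ (hbp i)))
      (fun i => hp2 _ (hZP _ (hbpd i))) f
  have hγ : ads Z * γp = γp * ads Z := by
    -- The commutator with `ads Z` is a derivation, so it hits each of the three factors of a
    -- cubic term; the last factor splits further by the Jacobi identity.
    have hterm : ∀ i j, ads Z * (ι Q (bpd i) * ι Q (bpd j) * ι Q (pp ⁅bp i, bp j⁆))
        - (ι Q (bpd i) * ι Q (bpd j) * ι Q (pp ⁅bp i, bp j⁆)) * ads Z
        = (ι Q (bpd i) * ι Q (bpd j) * ι Q (pp ⁅⁅Z, bp i⁆, bp j⁆)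
            + ι Q ⁅Z, bpd i⁆ * ι Q (bpd j) * ι Q (pp ⁅bp i, bp j⁆))
          + (ι Q (bpd i) * ι Q (bpd j) * ι Q (pp ⁅bp i, ⁅Z, bp j⁆⁆)
            + ι Q (bpd i) * ι Q ⁅Z, bpd j⁆ * ι Q (pp ⁅bp i, bp j⁆)) := by
      intro i j
      have h3 := hcomm (pp ⁅bp i, bp j⁆)
      rw [hppZ, leibniz_lie, map_add, map_add] at h3
      calc _ = (ads Z * ι Q (bpd i)) * ι Q (bpd j) * ι Q (pp ⁅bp i, bp j⁆)
            - ι Q (bpd i) * ι Q (bpd j) * ι Q (pp ⁅bp i, bp j⁆) * ads Z := by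
              simp only [mul_assoc]
        _ = ι Q (bpd i) * (ads Z * ι Q (bpd j)) * ι Q (pp ⁅bp i, bp j⁆)
            + ι Q ⁅Z, bpd i⁆ * ι Q (bpd j) * ι Q (pp ⁅bp i, bp j⁆)
            - ι Q (bpd i) * ι Q (bpd j) * ι Q (pp ⁅bp i, bp j⁆) * ads Z := by
              rw [hcomm (bpd i)]; noncomm_ring
        _ = ι Q (bpd i) * ι Q (bpd j) * (ads Z * ι Q (pp ⁅bp i, bp j⁆))
            + ι Q (bpd i) * ι Q ⁅Z, bpd j⁆ * ι Q (pp ⁅bp i, bp j⁆)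
            + ι Q ⁅Z, bpd i⁆ * ι Q (bpd j) * ι Q (pp ⁅bp i, bp j⁆)
            - ι Q (bpd i) * ι Q (bpd j) * ι Q (pp ⁅bp i, bp j⁆) * ads Z := by
              rw [hcomm (bpd j)]; noncomm_ring
        _ = _ := by rw [h3]; noncomm_ring
    have s1 : ∀ j, ∑ i, (ι Q (bpd i) * ι Q (bpd j) * ι Q (pp ⁅⁅Z, bp i⁆, bp j⁆)
        + ι Q ⁅Z, bpd i⁆ * ι Q (bpd j) * ι Q (pp ⁅bp i, bp j⁆)) = 0 := by
      intro j
      rw [Finset.sum_add_distrib]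
      exact key (LinearMap.mk₂ k
        (fun a b => ι Q b * ι Q (bpd j) * ι Q (pp ⁅a, bp j⁆))
        (by intros; simp [mul_add]) (by intros; simp)
        (by intros; simp [add_mul]) (by intros; simp))
    have s2 : ∀ i, ∑ j, (ι Q (bpd i) * ι Q (bpd j) * ι Q (pp ⁅bp i, ⁅Z, bp j⁆⁆)
        + ι Q (bpd i) * ι Q ⁅Z, bpd j⁆ * ι Q (pp ⁅bp i, bp j⁆)) = 0 := by
      intro i
      rw [Finset.sum_add_distrib]
      exact key (LinearMap.mk₂ k
        (fun a b => ι Q (bpd i) * ι Q b * ι Q (pp ⁅bp i, a⁆))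
        (by intros; simp [mul_add]) (by intros; simp)
        (by intros; simp [mul_add, add_mul]) (by intros; simp))
    rw [hγp, mul_smul_comm, smul_mul_assoc, ← sub_eq_zero, ← smul_sub]
    simp only [Finset.mul_sum, Finset.sum_mul, ← Finset.sum_sub_distrib, hterm]
    simp only [Finset.sum_add_distrib (f := fun j => _ + _) (g := fun j => _ + _)]
    rw [Finset.sum_add_distrib, Finset.sum_comm, Finset.sum_eq_zero fun j _ => s1 j,
      Finset.sum_eq_zero fun i _ => s2 i, add_zero, smul_zero]
  -- The quadratic part: `ρ(Z)` commutes with `∑ i, ιU (Y_i) ⊗ ι (Y*_i)`.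
  have hlin := key (LinearMap.mk₂ k
    (fun a b => UniversalEnvelopingAlgebra.ι k a ⊗ₜ[k] ι Q b)
    (by intros; simp [add_tmul]) (by intros; simp [smul_tmul'])
    (by intros; simp [tmul_add]) (by intros; simp))
  simp only [LinearMap.mk₂_apply] at hlin
  rw [← Finset.sum_add_distrib] at hlin
  rw [hDgh, mul_add, add_mul _ _ (_ + _)]
  congr 1
  · rw [← sub_eq_zero, Finset.mul_sum, Finset.sum_mul, ← Finset.sum_sub_distrib, ← hlin]
    refine Finset.sum_congr rfl fun i _ => ?_
    have hU : UniversalEnvelopingAlgebra.ι k ⁅Z, bp i⁆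
        = UniversalEnvelopingAlgebra.ι k Z * UniversalEnvelopingAlgebra.ι k (bp i)
          - UniversalEnvelopingAlgebra.ι k (bp i) * UniversalEnvelopingAlgebra.ι k Z := by
      letI := LieRing.ofAssociativeRing (A := UniversalEnvelopingAlgebra k g)
      exact LieHom.map_lie _ _ _
    simp only [add_mul, mul_add, Algebra.TensorProduct.tmul_mul_tmul, one_mul, mul_one, hU,
      hcomm, tmul_add, sub_tmul]
    abel
  · simp only [add_mul, mul_add, Algebra.TensorProduct.tmul_mul_tmul, one_mul, mul_one,
      mul_smul_comm, smul_mul_assoc, hγ]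
end

section
/- Square of Kostant's cubic Dirac operator: in A = U(𝔤) ⊗ Cl(𝔤) one has D_{𝔤/𝔥}² = D_𝔤² − (D'_𝔥)², and explicitly D_{𝔤/𝔥}² = (Σ_a ιU(Z*_a)·ιU(Z_a) + Σ_i ιU(Y*_i)·ιU(Y_i)) ⊗ 1 − Σ_a ρ'(Z*_a)·ρ'(Z_a) + (1/24)·(Σ_u tr_𝔤(ad(x*_u) ∘ ad(x_u)) − Σ_a tr_𝔥((ad(Z*_a) ∘ ad(Z_a))|_𝔥))·1, where (x_u) runs over the combined basis of 𝔤 with dual basis (x*_u), ρ'(Z) = ιU(Z) ⊗ 1 + 1 ⊗ ads_𝔭(Z) for Z ∈ 𝔥, and (ad(Z*_a) ∘ ad(Z_a))|_𝔥 denotes the restriction to 𝔥 of the composite adjoint operators (which preserves 𝔥). -/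
/-!
All computations take place in an arbitrary algebra `R` receiving a Clifford map `c` and a Lie map
`r` that commute with each other; in the end `R = U(𝔤) ⊗ Cl(𝔤)`, `c = 1 ⊗ ι` and `r = ιU ⊗ 1`.

For a quadratic Lie algebra, the cubic element `γ` satisfies `γ c(y) + c(y) γ = ads(y)`, where `ads`
is the spin lift of the adjoint representation (`CliffordFrame.gam_anti`), and `γ²` is the scalar
`(1/96) ∑ tr(ad x*_u ∘ ad x_u)` (`CliffordFrame.gam_sq`). These two facts give the square of the
absolute cubic Dirac operator as the Casimir element plus `(1/24) ∑ tr(ad x*_u ∘ ad x_u)`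
(`CliffordFrame.dirac_sq`). This applies to `𝔤` with `r`, and also to `𝔥` with the diagonal action
`ρ'(Z) = r(Z) + ads_𝔭(Z)`, which is again a Lie map and commutes with `c(𝔥)`.

The relative operator is reached by splitting: `γ_𝔤 = γ_𝔭 + γ_𝔥 + (1/2) ∑ c(Z*_a) ads_𝔭(Z_a)`
(`ReductivePair.gam_decomp`), so that `D_𝔤 = D_{𝔤/𝔥} + D'_𝔥`. The two summands anticommute
(`ReductivePair.diracH_anticomm`), since `D_{𝔤/𝔥}` commutes with `ρ'(𝔥)` and anticommutes with
`c(𝔥)`. Hence `D_𝔤² = D_{𝔤/𝔥}² + D'_𝔥²`, and both `D_𝔤²` and `D'_𝔥²` are known.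
-/

open CliffordAlgebra TensorProduct

/-- Data for computing in the Clifford algebra of `p(V) ⊆ V`: `c` satisfies the Clifford relations
for the symmetric form `B`, and `(x u)`, `(xd u)` are `B`-dual families, expressed through their
completeness relations `∑ B(y, x u) xd u = p y` and `∑ B(xd u, y) x u = p y`, where `p` stands for
the orthogonal projection onto the span of the `x u`. The cases used are `p = id` (all of `V`), and
`V = 𝔤` with `p` the projection onto `𝔭` or onto `𝔥`. -/
structure CliffordFrame {k V R ι : Type*} [Field k] [AddCommGroup V] [Module k V]
    [Ring R] [Algebra k R] [Fintype ι]
    (B : LinearMap.BilinForm k V) (c : V →ₗ[k] R) (p : V →ₗ[k] V) (x xd : ι → V) : Prop where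
  symm : ∀ a b, B a b = B b a
  cliff : ∀ a b, c a * c b + c b * c a = (2 * B a b) • (1 : R)
  expand_dual : ∀ y, ∑ u, B y (x u) • xd u = p y
  expand : ∀ y, ∑ u, B (xd u) y • x u = p y
  proj_basis : ∀ u, p (x u) = x u

namespace CliffordFrame

/-! ### Dual bases, spin elements and cubic elements -/

section General

variable {k V R ι M : Type*} [Field k] [AddCommGroup V] [Module k V]
    [Ring R] [Algebra k R] [Fintype ι] [AddCommGroup M] [Module k M]
    {B : LinearMap.BilinForm k V} {c : V →ₗ[k] R} {p : V →ₗ[k] V} {x xd : ι → V}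

/-- In a contraction of dual bases, a `B`-skew operator `T` moves from one slot to the other at the
cost of a sign. -/
theorem skew (F : CliffordFrame B c p x xd) {T : V →ₗ[k] V}
    (hT : ∀ a b, B (T a) b = -B a (T b)) (hpT : ∀ a, p (T a) = T a)
    (f : V →ₗ[k] V →ₗ[k] M) :
    ∑ u, f (T (xd u)) (x u) = -∑ u, f (xd u) (T (x u)) := by
  have h1 : ∀ u, f (T (xd u)) (x u) = ∑ v, -(B (xd u) (T (x v)) • f (xd v) (x u)) := by
    intro u
    conv_lhs => rw [← hpT, ← F.expand_dual]
    simp [hT]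
  have h2 : ∀ v, f (xd v) (T (x v)) = ∑ u, B (xd u) (T (x v)) • f (xd v) (x u) := by
    intro v
    conv_lhs => rw [← hpT, ← F.expand]
    simp
  simp_rw [h1, h2]
  rw [Finset.sum_comm]
  simp

/-- Contractions of dual bases are symmetric in the two slots, because the Casimir tensor
`∑ xd u ⊗ x u` is symmetric. -/
theorem swap (F : CliffordFrame B c p x xd) (f : V →ₗ[k] V →ₗ[k] M) :
    ∑ u, f (xd u) (x u) = ∑ u, f (x u) (xd u) := by
  have h1 : ∀ u, f (x u) (xd u) = ∑ v, B (x u) (x v) • f (xd v) (xd u) := by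
    intro u
    conv_lhs => rw [← F.proj_basis, ← F.expand_dual]
    simp
  have h2 : ∀ v, f (xd v) (x v) = ∑ u, B (x u) (x v) • f (xd v) (xd u) := by
    intro v
    conv_lhs => rw [← F.proj_basis, ← F.expand_dual]
    simp [F.symm (x v)]
  simp_rw [h1, h2]
  exact Finset.sum_comm

theorem skew_swap (F : CliffordFrame B c p x xd) {T : V →ₗ[k] V}
    (hT : ∀ a b, B (T a) b = -B a (T b)) (hpT : ∀ a, p (T a) = T a)
    (f : V →ₗ[k] V →ₗ[k] M) :
    ∑ u, f (xd u) (T (x u)) = -∑ u, f (T (x u)) (xd u) := by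
  have h1 := F.skew hT hpT f
  have h2 := F.swap (f ∘ₗ T)
  simp only [LinearMap.comp_apply] at h2
  rw [← h2, h1, neg_neg]

theorem anticomm (F : CliffordFrame B c p x xd) (a b : V) :
    c a * c b = (2 * B a b) • (1 : R) - c b * c a := by
  rw [← F.cliff, add_sub_cancel_right]

variable (c x xd) in
/-- The Clifford element `-(1/4) ∑ c(xd u) c(T(x u))` attached to an operator `T`. For `T` skew it
implements `T` by commutators, see `spin_comm`. -/
noncomputable def spin (T : V → V) : R := (-(1/4 : k)) • ∑ u, c (xd u) * c (T (x u))

variable (c x xd) in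
/-- The cubic Clifford element `-(1/24) ∑ c(xd u) c(xd v) c(m(x u, x v))` attached to a product
`m`. -/
noncomputable def cubic (m : V → V → V) : R :=
  (-(1/24 : k)) • ∑ u, ∑ v, c (xd u) * c (xd v) * c (m (x u) (x v))

theorem spin_comm [CharZero k] (F : CliffordFrame B c p x xd) {T : V →ₗ[k] V}
    (hT : ∀ a b, B (T a) b = -B a (T b)) (hpT : ∀ a, p (T a) = T a)
    (hTp : ∀ a, T (p a) = T a) (y : V) :
    spin c x xd T * c y - c y * spin c x xd T = c (T y) := by
  have h : ∀ a b : V, c a * c b * c y - c y * (c a * c b)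
      = (2 * B b y) • c a - (2 * B a y) • c b := by
    intro a b
    have h1 : c a * c b * c y = c a * ((2 * B b y) • (1 : R) - c y * c b) := by
      rw [mul_assoc, F.anticomm b y]
    have h2 : c y * (c a * c b) = ((2 * B a y) • (1 : R) - c a * c y) * c b := by
      rw [← mul_assoc, F.anticomm y a, F.symm y a]
    rw [h1, h2]; simp [mul_sub, sub_mul, mul_assoc]
  have h3 : ∑ u, B (T (x u)) y • c (xd u) = -c (T y) := by
    rw [← hpT y, ← F.expand_dual]
    simp [hT (x _) y, F.symm (x _) (T y)]
  have h4 : ∑ u, B (xd u) y • c (T (x u)) = c (T y) := by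
    rw [← hTp y, ← F.expand]
    simp
  simp only [spin, smul_mul_assoc, mul_smul_comm, Finset.sum_mul, Finset.mul_sum]
  rw [← smul_sub, ← Finset.sum_sub_distrib]
  simp only [h, Finset.sum_sub_distrib, mul_smul, ← Finset.smul_sum, h3, h4]
  module

/-- Since `[spin T, c y] = c (T y)`, the commutator of `spin T` with the quadratic element `spin T'`
differentiates each factor, and `skew` moves the derivative of the dual vector onto the other
factor. -/
theorem spin_lie [CharZero k] (F : CliffordFrame B c p x xd) {T T' : V →ₗ[k] V}
    (hT : ∀ a b, B (T a) b = -B a (T b)) (hpT : ∀ a, p (T a) = T a)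
    (hTp : ∀ a, T (p a) = T a) :
    spin c x xd T * spin c x xd T' - spin c x xd T' * spin c x xd T
      = spin c x xd (fun v => T (T' v) - T' (T v)) := by
  have hc := F.spin_comm hT hpT hTp
  set s := spin c x xd T with hs
  have h : ∀ a b : V, s * (c a * c b) - c a * c b * s = c (T a) * c b + c a * c (T b) := by
    intro a b; rw [← hc, ← hc]; noncomm_ring
  have h1 := F.skew hT hpT ((LinearMap.mul k R).compl₁₂ c (c ∘ₗ T'))
  simp only [LinearMap.compl₁₂_apply, LinearMap.comp_apply, LinearMap.mul_apply'] at h1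
  simp only [spin, smul_mul_assoc, mul_smul_comm, Finset.sum_mul, Finset.mul_sum]
  rw [← smul_sub, ← Finset.sum_sub_distrib]
  simp only [h, Finset.sum_add_distrib, h1, map_sub, mul_sub, Finset.sum_sub_distrib]
  congr 1
  abel

/-- An element `s` that implements by commutators a skew derivation `T` of the product `m` commutes
with the cubic element of `m`. -/
theorem cubic_comm (F : CliffordFrame B c p x xd) {T : V →ₗ[k] V}
    (hT : ∀ a b, B (T a) b = -B a (T b)) (hpT : ∀ a, p (T a) = T a)
    (m : V →ₗ[k] V →ₗ[k] V)
    (hm : ∀ u v, T (m (x u) (x v)) = m (T (x u)) (x v) + m (x u) (T (x v)))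
    (s : R) (hs : ∀ y, s * c y - c y * s = c (T y)) :
    s * cubic c x xd (fun a b => m a b) = cubic c x xd (fun a b => m a b) * s := by
  have h : ∀ a b d : V, s * (c a * c b * c d) - c a * c b * c d * s
      = c (T a) * c b * c d + c a * c (T b) * c d + c a * c b * c (T d) := by
    intro a b d; rw [← hs, ← hs, ← hs]; noncomm_ring
  have h1 : ∀ v, ∑ u, c (T (xd u)) * c (xd v) * c (m (x u) (x v))
      = -∑ u, c (xd u) * c (xd v) * c (m (T (x u)) (x v)) := by
    intro v
    have := F.skew hT hpT ((LinearMap.mul k R).compl₁₂ ((LinearMap.mulRight k (c (xd v))) ∘ₗ c)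
      (c ∘ₗ m.flip (x v)))
    simpa using this
  have h2 : ∀ u, ∑ v, c (xd u) * c (T (xd v)) * c (m (x u) (x v))
      = -∑ v, c (xd u) * c (xd v) * c (m (x u) (T (x v))) := by
    intro u
    have := F.skew hT hpT ((LinearMap.mul k R).compl₁₂ ((LinearMap.mulLeft k (c (xd u))) ∘ₗ c)
      (c ∘ₗ m (x u)))
    simpa using this
  rw [← sub_eq_zero]
  simp only [cubic, smul_mul_assoc, mul_smul_comm, Finset.sum_mul, Finset.mul_sum]
  rw [← smul_sub, ← Finset.sum_sub_distrib]
  simp_rw [← Finset.sum_sub_distrib, h, hm, map_add, mul_add, Finset.sum_add_distrib]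
  rw [Finset.sum_comm]
  simp_rw [h1, h2, Finset.sum_neg_distrib]
  rw [Finset.sum_comm]
  module

end General

/-! ### The cubic Dirac operator of a quadratic Lie algebra -/

section Lie

variable {k L R ι : Type*} [Field k] [LieRing L] [LieAlgebra k L]
    [Ring R] [Algebra k R] [Fintype ι]
    {B : LinearMap.BilinForm k L} {c : L →ₗ[k] R} {x xd : ι → L}

variable (k c x xd) in
/-- The spin lift of the adjoint representation, `y ↦ -(1/4) ∑ c(xd u) c([y, x u])`. -/
noncomputable def ads : L →ₗ[k] R where
  toFun y := spin c x xd (LieAlgebra.ad k L y)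
  map_add' a b := by simp [spin, mul_add, Finset.sum_add_distrib]
  map_smul' r a := by simp [spin, ← Finset.smul_sum, smul_comm r]

theorem ads_apply (y : L) : ads k c x xd y = spin c x xd (LieAlgebra.ad k L y) := rfl

theorem ad_skew (hinv : ∀ X Y Z : L, B ⁅X, Y⁆ Z = B X ⁅Y, Z⁆)
    (z a b : L) :
    B (LieAlgebra.ad k L z a) b = -B a (LieAlgebra.ad k L z b) := by
  simp only [LieAlgebra.ad_apply]
  rw [← hinv, ← lie_skew z a, map_neg, LinearMap.neg_apply]

variable (k c x xd) in
/-- The cubic element `γ = -(1/24) ∑ c(xd u) c(xd v) c([x u, x v])` of a quadratic Lie algebra. -/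
noncomputable def gam : R := cubic (k := k) c x xd (fun a b => ⁅a, b⁆)

theorem ads_comm [CharZero k] (F : CliffordFrame B c LinearMap.id x xd)
    (hinv : ∀ X Y Z : L, B ⁅X, Y⁆ Z = B X ⁅Y, Z⁆) (z y : L) :
    ads k c x xd z * c y - c y * ads k c x xd z = c ⁅z, y⁆ :=
  F.spin_comm (ad_skew hinv z) (fun _ => rfl) (fun _ => rfl) y

theorem gam_comm_ads [CharZero k] (F : CliffordFrame B c LinearMap.id x xd)
    (hinv : ∀ X Y Z : L, B ⁅X, Y⁆ Z = B X ⁅Y, Z⁆) (z : L) :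
    ads k c x xd z * gam k c x xd = gam k c x xd * ads k c x xd z :=
  F.cubic_comm (ad_skew hinv z) (fun _ => rfl) (LieModule.toEnd k L L : L →ₗ[k] L →ₗ[k] L)
    (by intro u v; simp) _ (F.ads_comm hinv z)

theorem sum_bracket [CharZero k] (z : L) :
    ∑ u, c (xd u) * c ⁅z, x u⁆ = (-4 : k) • ads k c x xd z := by
  simp only [ads_apply, spin, smul_smul, LieAlgebra.ad_apply]
  norm_num

theorem sum_bracket' [CharZero k] (z : L) :
    ∑ u, c (xd u) * c ⁅x u, z⁆ = (4 : k) • ads k c x xd z := by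
  have := sum_bracket (k := k) (c := c) (x := x) (xd := xd) z
  simp_rw [← lie_skew _ z, map_neg, mul_neg, Finset.sum_neg_distrib, this]
  module

/-- The anticommutator of `γ` with a vector is the spin lift of that vector. By invariance of `B`
and completeness of the dual bases, each of the three contractions of `y` against the cubic element
gives `8 ads(y)` up to sign. -/
theorem gam_anti [CharZero k] (F : CliffordFrame B c LinearMap.id x xd)
    (hinv : ∀ X Y Z : L, B ⁅X, Y⁆ Z = B X ⁅Y, Z⁆) (y : L) :
    gam k c x xd * c y + c y * gam k c x xd = ads k c x xd y := by
  have h : ∀ a b d : L, c a * c b * c d * c y + c y * (c a * c b * c d)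
      = (2 * B y d) • (c a * c b) - (2 * B b y) • (c a * c d) + (2 * B a y) • (c b * c d) := by
    intro a b d
    have e : c a * c b * c d * c y + c y * (c a * c b * c d)
      = c a * c b * (c d * c y + c y * c d) - c a * (c b * c y + c y * c b) * c d
        + (c a * c y + c y * c a) * c b * c d := by noncomm_ring
    rw [e, F.cliff, F.cliff, F.cliff, F.symm d y]
    simp
  have h1 : ∀ u, ∑ v, B y ⁅x u, x v⁆ • (c (xd u) * c (xd v)) = c (xd u) * c ⁅y, x u⁆ := by
    intro u
    have := congrArg (fun t => c (xd u) * c t) (F.expand_dual ⁅y, x u⁆)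
    simpa [Finset.mul_sum, hinv] using this
  have h2 : ∀ u, ∑ v, B (xd v) y • (c (xd u) * c ⁅x u, x v⁆) = c (xd u) * c ⁅x u, y⁆ := by
    intro u
    have := congrArg (fun t => c (xd u) * c ⁅x u, t⁆) (F.expand y)
    simpa [Finset.mul_sum, lie_sum] using this
  have h3 : ∀ v, ∑ u, B (xd u) y • (c (xd v) * c ⁅x u, x v⁆) = c (xd v) * c ⁅y, x v⁆ := by
    intro v
    have := congrArg (fun t => c (xd v) * c ⁅t, x v⁆) (F.expand y)
    simpa [Finset.mul_sum, sum_lie] using this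
  have h4 : ∑ u, B (xd u) y • ∑ v, c (xd v) * c ⁅x u, x v⁆ = ∑ v, c (xd v) * c ⁅y, x v⁆ := by
    simp_rw [← h3, Finset.smul_sum]
    exact Finset.sum_comm
  simp only [gam, cubic, smul_mul_assoc, mul_smul_comm, Finset.sum_mul, Finset.mul_sum]
  rw [← smul_add, ← Finset.sum_add_distrib]
  simp_rw [← Finset.sum_add_distrib, h, Finset.sum_add_distrib, Finset.sum_sub_distrib, mul_smul,
    ← Finset.smul_sum, h1, h2, h4]
  simp_rw [sum_bracket (k := k), sum_bracket' (k := k)]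
  module

theorem sum_mul_ads [CharZero k] : ∑ u, c (xd u) * ads k c x xd (x u) = (6 : k) • gam k c x xd := by
  simp only [ads_apply, spin, gam, cubic, mul_smul_comm, ← Finset.smul_sum, smul_smul,
    LieAlgebra.ad_apply, Finset.mul_sum, mul_assoc]
  norm_num

/-- The spin Casimir is `12 γ²`: write `ads(xd u) = γ c(xd u) + c(xd u) γ`, use that `γ` commutes
with `ads(x u)`, and sum with `sum_mul_ads`. -/
theorem sum_ads_mul_ads [CharZero k] (F : CliffordFrame B c LinearMap.id x xd)
    (hinv : ∀ X Y Z : L, B ⁅X, Y⁆ Z = B X ⁅Y, Z⁆) :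
    ∑ u, ads k c x xd (xd u) * ads k c x xd (x u)
      = (12 : k) • (gam k c x xd * gam k c x xd) := by
  have h : ∀ u, ads k c x xd (xd u) * ads k c x xd (x u)
      = gam k c x xd * (c (xd u) * ads k c x xd (x u))
        + (c (xd u) * ads k c x xd (x u)) * gam k c x xd := by
    intro u
    rw [← F.gam_anti hinv (xd u), mul_assoc _ _ (gam k c x xd), F.gam_comm_ads hinv]
    noncomm_ring
  simp_rw [h, Finset.sum_add_distrib, ← Finset.mul_sum, ← Finset.sum_mul, sum_mul_ads (k := k)]
  simp only [mul_smul_comm, smul_mul_assoc]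
  module

/-- The operators `ad y ∘ ad z` and `ad z ∘ ad y` are `B`-adjoint to each other, so exchanging them
reverses the two Clifford factors. -/
theorem sum_lie_lie_reverse (F : CliffordFrame B c LinearMap.id x xd)
    (hinv : ∀ X Y Z : L, B ⁅X, Y⁆ Z = B X ⁅Y, Z⁆) (y z : L) :
    ∑ u, c (xd u) * c ⁅y, ⁅z, x u⁆⁆ = ∑ u, c ⁅z, ⁅y, x u⁆⁆ * c (xd u) := by
  have h1 := F.skew (ad_skew hinv z) (fun _ => rfl)
    ((LinearMap.mul k R).compl₁₂ c (c ∘ₗ LieAlgebra.ad k L y))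
  have h2 := F.skew (ad_skew hinv y) (fun _ => rfl)
    ((LinearMap.mul k R).compl₁₂ (c ∘ₗ LieAlgebra.ad k L z) c)
  have h3 := F.swap ((LinearMap.mul k R).compl₁₂
    (c ∘ₗ LieAlgebra.ad k L z ∘ₗ LieAlgebra.ad k L y) c)
  simp only [LinearMap.compl₁₂_apply, LinearMap.comp_apply, LinearMap.mul_apply',
    LieAlgebra.ad_apply] at h1 h2 h3
  rw [← h3, h2, h1, neg_neg]

/-- `γ²` is the scalar `(1/96) ∑ tr(ad xd w ∘ ad x w)`. Expanding `γ γ + γ γ` through `gam_anti`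
expresses it by the spin Casimir, a multiple of `γ²` by `sum_ads_mul_ads`, and by a contraction of
the adjoint Casimir operator, which is scalar because that operator is symmetric; the resulting
linear equation determines `γ²`. -/
theorem gam_sq [CharZero k] (F : CliffordFrame B c LinearMap.id x xd)
    (hinv : ∀ X Y Z : L, B ⁅X, Y⁆ Z = B X ⁅Y, Z⁆) :
    gam k c x xd * gam k c x xd
      = ((1/96 : k) * ∑ w, ∑ u, B (xd u) ⁅xd w, ⁅x w, x u⁆⁆) • (1 : R) := by
  set γ := gam k c x xd with hγ
  set s := ads k c x xd with hs
  set K := ∑ u, s (xd u) * s (x u) with hK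
  set t := ∑ w, ∑ u, B (xd u) ⁅xd w, ⁅x w, x u⁆⁆ with ht
  have hK12 : K = (12 : k) • (γ * γ) := F.sum_ads_mul_ads hinv
  -- `2 γ²` becomes a combination of `T1 = -4 K` and the two orderings `E`, `Er` of the contracted
  -- Casimir operator, which agree and sum to `2 t`.
  set T1 := ∑ u, ∑ v, c (xd u) * c (xd v) * s ⁅x u, x v⁆ with hT1
  set E := ∑ u, ∑ w, c (xd u) * c ⁅xd w, ⁅x w, x u⁆⁆ with hE
  set Er := ∑ u, ∑ w, c ⁅xd w, ⁅x w, x u⁆⁆ * c (xd u) with hEr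
  have hEE : E = Er := by
    have h := F.swap (M := R) (LinearMap.mk₂ k (fun a b => ∑ u, c ⁅b, ⁅a, x u⁆⁆ * c (xd u))
      (by intros; simp [add_mul, Finset.sum_add_distrib])
      (by intros; simp [Finset.smul_sum])
      (by intros; simp [add_mul, Finset.sum_add_distrib])
      (by intros; simp [Finset.smul_sum]))
    simp only [LinearMap.mk₂_apply] at h
    rw [hE, hEr, Finset.sum_comm]
    simp_rw [F.sum_lie_lie_reverse hinv]
    rw [h, Finset.sum_comm]
  have hsum : E + Er = (2 * t) • (1 : R) := by
    rw [hE, hEr, ← Finset.sum_add_distrib]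
    simp_rw [← Finset.sum_add_distrib, F.cliff, ← Finset.sum_smul, ← Finset.mul_sum]
    rw [Finset.sum_comm]
  have hcomm : ∀ z y, s z * c y = c y * s z + c ⁅z, y⁆ := by
    intro z y; rw [← F.ads_comm hinv]; abel
  have hflip : ∀ u v, ⁅⁅x u, x v⁆, xd v⁆ = ⁅xd v, ⁅x v, x u⁆⁆ := by
    intro u v; rw [← lie_skew, ← lie_skew (x u) (x v), lie_neg, neg_neg]
  have h1 : T1 = (-4 : k) • K := by
    have e : ∀ u, ∑ v, c (xd u) * c (xd v) * s ⁅x u, x v⁆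
        = -∑ v, c (xd u) * c ⁅x u, x v⁆ * s (xd v) := by
      intro u
      have := F.skew_swap (ad_skew hinv (x u)) (fun _ => rfl)
        ((LinearMap.mul k R).compl₁₂ (LinearMap.mulLeft k (c (xd u)) ∘ₗ c) s)
      simpa using this
    have e' := F.swap ((LinearMap.mul k R).compl₁₂ s s)
    simp only [LinearMap.compl₁₂_apply, LinearMap.mul_apply'] at e'
    rw [hT1, hK, e']
    simp_rw [e, Finset.sum_neg_distrib]
    rw [Finset.sum_comm]
    simp_rw [← Finset.sum_mul, sum_bracket' (k := k), smul_mul_assoc, ← Finset.smul_sum]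
    module
  have h2 : ∑ u, ∑ v, c (xd u) * s (xd v) * c ⁅x u, x v⁆ = -T1 - E := by
    have e : ∀ u, ∑ v, c (xd u) * s (xd v) * c ⁅x u, x v⁆
        = -∑ v, c (xd u) * s ⁅x u, x v⁆ * c (xd v) := by
      intro u
      have := F.skew_swap (ad_skew hinv (x u)) (fun _ => rfl)
        ((LinearMap.mul k R).compl₁₂ (LinearMap.mulLeft k (c (xd u)) ∘ₗ s) c)
      simpa using this
    simp_rw [e, mul_assoc, hcomm, hflip, mul_add, Finset.sum_neg_distrib, Finset.sum_add_distrib]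
    simp only [hT1, hE, mul_assoc]
    abel
  have h3 : ∑ u, ∑ v, s (xd u) * c (xd v) * c ⁅x u, x v⁆ = T1 + E - Er := by
    have e : ∀ v, ∑ u, s (xd u) * c (xd v) * c ⁅x u, x v⁆
        = ∑ u, s ⁅x v, x u⁆ * c (xd v) * c (xd u) := by
      intro v
      have := F.skew_swap (ad_skew hinv (x v)) (fun _ => rfl)
        ((LinearMap.mul k R).compl₁₂ (LinearMap.mulRight k (c (xd v)) ∘ₗ s) c)
      simp only [LinearMap.compl₁₂_apply, LinearMap.comp_apply, LinearMap.mul_apply',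
        LieAlgebra.ad_apply, LinearMap.mulRight_apply] at this
      rw [← neg_inj, ← this, ← Finset.sum_neg_distrib]
      refine Finset.sum_congr rfl fun u _ => ?_
      rw [← lie_skew (x v) (x u), map_neg, mul_neg]
    have e2 : ∀ w a b, s w * c a * c b = c a * c b * s w + c a * c ⁅w, b⁆ + c ⁅w, a⁆ * c b := by
      intro w a b
      rw [hcomm, add_mul, mul_assoc, hcomm]
      noncomm_ring
    have e3 : ∑ u, ∑ v, c ⁅⁅x u, x v⁆, xd u⁆ * c (xd v) = -Er := by
      rw [hEr, Finset.sum_comm, ← Finset.sum_neg_distrib]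
      simp_rw [← Finset.sum_neg_distrib]
      refine Finset.sum_congr rfl fun v _ => Finset.sum_congr rfl fun u _ => ?_
      rw [← lie_skew, map_neg, neg_mul]
    rw [Finset.sum_comm]
    simp_rw [e, e2, Finset.sum_add_distrib, e3, hflip]
    simp only [hT1, hE]
    abel
  have h : ∀ a b d, γ * (c a * c b * c d) + c a * c b * c d * γ
      = s a * c b * c d - c a * s b * c d + c a * c b * s d := by
    intro a b d
    rw [← F.gam_anti hinv, ← F.gam_anti hinv, ← F.gam_anti hinv]
    noncomm_ring
  -- Left-hand side: expand one factor `γ` of each product as a sum of cubic monomials.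
  have h4 : γ * γ + γ * γ = (-(1/24 : k)) • ((T1 + E - Er) - (-T1 - E) + T1) := by
    rw [← h2, ← h3, hT1]
    simp_rw [← Finset.sum_sub_distrib, ← Finset.sum_add_distrib, ← h, Finset.sum_add_distrib,
      ← Finset.sum_mul, ← Finset.mul_sum, smul_add]
    rw [← mul_smul_comm, ← smul_mul_assoc]
    rfl
  have h5 : E = t • (1 : R) := by
    have : (2 : k) • E = (2 : k) • (t • (1 : R)) := by
      rw [smul_smul, ← hsum, ← hEE]; module
    exact smul_right_injective R (two_ne_zero (α := k)) this
  rw [h1, hK12, ← hEE, h5] at h4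
  -- With `T1 = -48 γ²` and `E = Er = t`, `h4` reads `2 γ² = 6 γ² - t / 24`.
  have h6 : (4 : k) • (γ * γ) = (4 : k) • (((1/96 : k) * t) • (1 : R)) := by
    calc (4 : k) • (γ * γ) = (6 : k) • (γ * γ) - (γ * γ + γ * γ) := by module
      _ = _ := by rw [h4]; module
  exact smul_right_injective R (by norm_num : (4 : k) ≠ 0) h6

/-- Square of the cubic Dirac operator of a quadratic Lie algebra, for any linear `r` that turns
brackets into commutators and commutes with the Clifford elements. With `A = ∑ r(x u) c(xd u)` and
`N = ∑ r(x u) ads(xd u)`, one has `A² = Cas_r - 2 N` and `A γ + γ A = N`, so the linear terms cancel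
and `4 γ²` remains. -/
theorem dirac_sq [CharZero k] (F : CliffordFrame B c LinearMap.id x xd)
    (hinv : ∀ X Y Z : L, B ⁅X, Y⁆ Z = B X ⁅Y, Z⁆)
    (r : L →ₗ[k] R) (hr : ∀ a b, r ⁅a, b⁆ = r a * r b - r b * r a)
    (hrc : ∀ a b, r a * c b = c b * r a) :
    (∑ u, r (x u) * c (xd u) + (2 : k) • gam k c x xd)
        * (∑ u, r (x u) * c (xd u) + (2 : k) • gam k c x xd)
      = ∑ u, r (xd u) * r (x u)
        + ((1/24 : k) * ∑ w, ∑ u, B (xd u) ⁅xd w, ⁅x w, x u⁆⁆) • (1 : R) := by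
  set A := ∑ u, r (x u) * c (xd u) with hA
  set γ := gam k c x xd with hγ
  set N := ∑ u, r (x u) * ads k c x xd (xd u) with hN
  have hrγ : ∀ a, r a * γ = γ * r a := by
    intro a
    have h3 : ∀ b d e, r a * (c b * c d * c e) = c b * c d * c e * r a := by
      intro b d e
      rw [mul_assoc (c b * c d), ← hrc, mul_assoc (c b), mul_assoc (c b), ← mul_assoc (c d),
        ← hrc, ← mul_assoc, hrc]
      noncomm_ring
    simp only [hγ, gam, cubic, mul_smul_comm, smul_mul_assoc, Finset.mul_sum, Finset.sum_mul, h3]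
  have hAγ : A * γ + γ * A = N := by
    rw [hA, hN, Finset.sum_mul, Finset.mul_sum, ← Finset.sum_add_distrib]
    refine Finset.sum_congr rfl fun u _ => ?_
    rw [← F.gam_anti hinv, ← mul_assoc γ, ← hrγ]
    noncomm_ring
  have hAA : A * A = ∑ u, ∑ v, r (x u) * r (x v) * (c (xd u) * c (xd v)) := by
    rw [hA, Finset.sum_mul]
    simp_rw [Finset.mul_sum]
    refine Finset.sum_congr rfl fun u _ => Finset.sum_congr rfl fun v _ => ?_
    rw [mul_assoc, ← mul_assoc (c _), ← hrc]; noncomm_ring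
  have hAA' : A * A = ∑ u, ∑ v, r (x v) * r (x u) * (c (xd v) * c (xd u)) := by
    rw [hAA, Finset.sum_comm]
  have h1 : ∑ u, ∑ v, r ⁅x u, x v⁆ * (c (xd u) * c (xd v)) = (-4 : k) • N := by
    have : ∀ u, ∑ v, r ⁅x u, x v⁆ * (c (xd u) * c (xd v))
        = - ∑ v, r (x v) * (c (xd u) * c ⁅x u, xd v⁆) := by
      intro u
      have := F.skew (ad_skew hinv (x u)) (fun _ => rfl)
        ((LinearMap.mul k R).compl₁₂ r (LinearMap.mulLeft k (c (xd u)) ∘ₗ c)).flip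
      simp at this
      rw [this, neg_neg]
    simp_rw [this, Finset.sum_neg_distrib]
    rw [Finset.sum_comm]
    simp_rw [← Finset.mul_sum, sum_bracket' (k := k), mul_smul_comm, ← Finset.smul_sum]
    module
  have h2 : ∑ u, ∑ v, r (x v) * r (x u) * ((2 * B (xd u) (xd v)) • (1 : R))
      = (2 : k) • ∑ u, r (xd u) * r (x u) := by
    have : ∀ u, ∑ v, r (x v) * r (x u) * ((2 * B (xd u) (xd v)) • (1 : R))
        = (2 : k) • (r (xd u) * r (x u)) := by
      intro u
      have := congrArg (fun t => r t * r (x u)) (F.expand (xd u))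
      simp only [map_sum, map_smul, Finset.sum_mul, smul_mul_assoc, LinearMap.id_apply] at this
      rw [← this, Finset.smul_sum]
      simp [smul_smul, F.symm (xd u)]
    simp_rw [this, Finset.smul_sum]
  have h3 : A * A + A * A = (-4 : k) • N + (2 : k) • ∑ u, r (xd u) * r (x u) := by
    rw [← h1, ← h2]
    nth_rewrite 1 [hAA]
    rw [hAA', ← Finset.sum_add_distrib, ← Finset.sum_add_distrib]
    refine Finset.sum_congr rfl fun u _ => ?_
    rw [← Finset.sum_add_distrib, ← Finset.sum_add_distrib]
    refine Finset.sum_congr rfl fun v _ => ?_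
    rw [hr, ← F.cliff]
    noncomm_ring
  have h4 : (2 : k) • (A * A) = (2 : k) • ((-2 : k) • N + ∑ u, r (xd u) * r (x u)) := by
    rw [two_smul, h3]
    module
  have h5 := smul_right_injective R (two_ne_zero (α := k)) h4
  rw [add_mul, mul_add, mul_add, h5, smul_mul_assoc, smul_mul_assoc, mul_smul_comm, mul_smul_comm,
    F.gam_sq hinv, ← hAγ]
  module

end Lie
end CliffordFrame


/-! ### Reductive pairs -/

/-- The situation `𝔤 = 𝔥 ⊕ 𝔭` for an invariant form `B`, expressed through the projection `pp` of
`𝔤` onto `𝔭` along `𝔥`: it is idempotent, `B`-self-adjoint, kills `𝔥`, has its complement `1 - pp`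
valued in `𝔥`, and `[𝔥, 𝔭] ⊆ 𝔭`. -/
structure ReductivePair {k g : Type*} [Field k] [LieRing g] [LieAlgebra k g]
    (B : LinearMap.BilinForm k g) (H : LieSubalgebra k g) (pp : g →ₗ[k] g) : Prop where
  inv : ∀ X Y Z : g, B ⁅X, Y⁆ Z = B X ⁅Y, Z⁆
  idem : ∀ a, pp (pp a) = pp a
  adj : ∀ a b, B (pp a) b = B a (pp b)
  zero : ∀ z ∈ H, pp z = 0
  stable : ∀ z ∈ H, ∀ a, pp ⁅z, pp a⁆ = ⁅z, pp a⁆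
  sub_mem : ∀ a, a - pp a ∈ H

namespace ReductivePair

open CliffordFrame

variable {k g R A' I : Type*} [Field k] [LieRing g] [LieAlgebra k g]
    [Ring R] [Algebra k R] [Fintype A'] [Fintype I]
    {B : LinearMap.BilinForm k g} {H : LieSubalgebra k g} {pp : g →ₗ[k] g} {c r : g →ₗ[k] R}
    {bh bhd : A' → g} {bp bpd : I → g}

/-- The compression `pp ∘ ad z ∘ pp` of `ad z` to `𝔭`, extended by zero on `𝔥`. -/
noncomputable def adRel (pp : g →ₗ[k] g) (z : g) : g →ₗ[k] g := pp ∘ₗ LieAlgebra.ad k g z ∘ₗ pp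

theorem adRel_apply (z a : g) : adRel pp z a = pp ⁅z, pp a⁆ := rfl

theorem adRel_skew (S : ReductivePair B H pp) (z a b : g) :
    B (adRel pp z a) b = -B a (adRel pp z b) := by
  rw [adRel_apply, adRel_apply, S.adj, ← S.adj a]
  exact ad_skew S.inv z _ _

theorem pp_adRel (S : ReductivePair B H pp) (z a : g) : pp (adRel pp z a) = adRel pp z a :=
  S.idem _

theorem adRel_pp (S : ReductivePair B H pp) (z a : g) : adRel pp z (pp a) = adRel pp z a := by
  rw [adRel_apply, adRel_apply, S.idem]

theorem adRel_mem (S : ReductivePair B H pp) (z : g) {y : g} (hy : y ∈ H) :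
    adRel pp z y = 0 := by
  rw [adRel_apply, S.zero y hy]; simp

theorem adRel_lie (S : ReductivePair B H pp) {z w : g} (hz : z ∈ H) (hw : w ∈ H) (v : g) :
    adRel pp ⁅z, w⁆ v = adRel pp z (adRel pp w v) - adRel pp w (adRel pp z v) := by
  simp only [adRel_apply, S.stable z hz, S.stable w hw]
  rw [lie_lie, map_sub]

theorem orth (S : ReductivePair B H pp) {z : g} (hz : z ∈ H) (a : g) : B z (pp a) = 0 := by
  rw [← S.adj, S.zero z hz]; simp

variable (c bp bpd pp) in
/-- The relative spin map `ads_𝔭`, the spin element of `adRel pp z` with respect to dual bases of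
`𝔭`. -/
noncomputable def spinRel : g →ₗ[k] R where
  toFun z := spin c bp bpd (adRel pp z)
  map_add' a b := by simp [spin, adRel_apply, mul_add, Finset.sum_add_distrib]
  map_smul' t a := by simp [spin, adRel_apply, ← Finset.smul_sum, smul_comm t]

theorem spinRel_apply (z : g) :
    spinRel pp c bp bpd z = spin c bp bpd (adRel pp z) := rfl

theorem comm_spinRel (hrc : ∀ a b, r a * c b = c b * r a) (a z : g) :
    r a * spinRel pp c bp bpd z = spinRel pp c bp bpd z * r a := by
  have : ∀ b d, r a * (c b * c d) = c b * c d * r a := by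
    intro b d
    rw [← mul_assoc, hrc, mul_assoc, hrc, mul_assoc]
  simp only [spinRel_apply, spin, mul_smul_comm, smul_mul_assoc, Finset.mul_sum,
    Finset.sum_mul, this]

theorem spinRel_comm [CharZero k] (S : ReductivePair B H pp)
    (F : CliffordFrame B c pp bp bpd) (z y : g) :
    spinRel pp c bp bpd z * c y - c y * spinRel pp c bp bpd z = c (adRel pp z y) :=
  F.spin_comm (S.adRel_skew z) (S.pp_adRel z) (S.adRel_pp z) y

theorem spinRel_comm_mem [CharZero k] (S : ReductivePair B H pp)
    (F : CliffordFrame B c pp bp bpd) (z : g) {y : g} (hy : y ∈ H) :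
    spinRel pp c bp bpd z * c y = c y * spinRel pp c bp bpd z := by
  rw [← sub_eq_zero, S.spinRel_comm F, S.adRel_mem z hy, map_zero]

theorem spinRel_lie [CharZero k] (S : ReductivePair B H pp)
    (F : CliffordFrame B c pp bp bpd) {z w : g} (hz : z ∈ H) (hw : w ∈ H) :
    spinRel pp c bp bpd ⁅z, w⁆ = spinRel pp c bp bpd z * spinRel pp c bp bpd w
      - spinRel pp c bp bpd w * spinRel pp c bp bpd z := by
  simp only [spinRel_apply]
  rw [F.spin_lie (S.adRel_skew z) (S.pp_adRel z) (S.adRel_pp z)]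
  simp only [spin, S.adRel_lie hz hw]

/-- `γ_𝔤 = γ_𝔭 + γ_𝔥 + (1/2) ∑ c(Z*_a) ads_𝔭(Z_a)`. In the cubic sum over the combined basis, the
terms with one index in `𝔥` and one in `𝔭` (in either order), and the `𝔥`-part of the terms with
both indices in `𝔭`, each contribute `-4` times the mixed sum. -/
theorem gam_decomp [CharZero k] (S : ReductivePair B H pp) (F : CliffordFrame B c pp bp bpd)
    (Fh : CliffordFrame B c (LinearMap.id - pp) bh bhd) (hbh : ∀ a, bh a ∈ H)
    (hbhd : ∀ a, bhd a ∈ H) (hbpd : ∀ i, pp (bpd i) = bpd i) :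
    gam k c (Sum.elim bh bp) (Sum.elim bhd bpd)
      = cubic c bp bpd (fun a b => pp ⁅a, b⁆) + gam k c bh bhd
        + (1/2 : k) • ∑ a, c (bhd a) * spinRel pp c bp bpd (bh a) := by
  have hW : ∀ a, ∑ i, c (bpd i) * c ⁅bh a, bp i⁆ = (-4 : k) • spinRel pp c bp bpd (bh a) := by
    intro a
    have : ∀ i, adRel pp (bh a) (bp i) = ⁅bh a, bp i⁆ := by
      intro i
      rw [adRel_apply, S.stable _ (hbh a), F.proj_basis]
    simp only [spinRel_apply, spin, this, smul_smul]
    norm_num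
  set W := ∑ a, c (bhd a) * spinRel pp c bp bpd (bh a) with hWd
  have h1 : ∑ a, ∑ i, c (bhd a) * c (bpd i) * c ⁅bh a, bp i⁆ = (-4 : k) • W := by
    simp_rw [mul_assoc, ← Finset.mul_sum, hW, mul_smul_comm, ← Finset.smul_sum, hWd]
  have h2 : ∑ i, ∑ a, c (bpd i) * c (bhd a) * c ⁅bp i, bh a⁆ = (-4 : k) • W := by
    rw [← h1, Finset.sum_comm]
    refine Finset.sum_congr rfl fun a _ => Finset.sum_congr rfl fun i _ => ?_
    rw [F.anticomm (bpd i), F.symm, ← hbpd i, S.orth (hbhd a), ← lie_skew (bp i) (bh a),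
      mul_zero, zero_smul, zero_sub, map_neg, neg_mul_neg]
  have h3 : ∑ i, ∑ j, c (bpd i) * c (bpd j) * c ⁅bp i, bp j⁆
      = ∑ i, ∑ j, c (bpd i) * c (bpd j) * c (pp ⁅bp i, bp j⁆) + (-4 : k) • W := by
    have e : ∀ i j, c ⁅bp i, bp j⁆
        = c (pp ⁅bp i, bp j⁆) + ∑ a, B ⁅bh a, bp i⁆ (bp j) • c (bhd a) := by
      intro i j
      have := congrArg c (Fh.expand_dual ⁅bp i, bp j⁆)
      simp only [LinearMap.sub_apply, LinearMap.id_apply, map_sub, map_sum, map_smul] at this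
      rw [← sub_eq_iff_eq_add', ← this]
      simp_rw [F.symm ⁅bp i, bp j⁆, S.inv]
    have e2 : ∀ i a, ∑ j, B ⁅bh a, bp i⁆ (bp j) • c (bpd j) = c ⁅bh a, bp i⁆ := by
      intro i a
      have := congrArg c (F.expand_dual ⁅bh a, pp (bp i)⁆)
      rw [S.stable _ (hbh a), F.proj_basis] at this
      simpa using this
    have e3 : ∑ i, ∑ j, c (bpd i) * c (bpd j) * ∑ a, B ⁅bh a, bp i⁆ (bp j) • c (bhd a)
        = ∑ a, (∑ i, c (bpd i) * c ⁅bh a, bp i⁆) * c (bhd a) := by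
      simp_rw [← e2, Finset.sum_mul, Finset.mul_sum, Finset.sum_mul]
      refine Eq.trans (Finset.sum_congr rfl fun i _ => ?_) Finset.sum_comm
      rw [Finset.sum_comm]
      simp
    simp_rw [e, mul_add, Finset.sum_add_distrib, e3, hW, smul_mul_assoc,
      S.spinRel_comm_mem F _ (hbhd _), ← Finset.smul_sum, hWd]
  simp only [gam, cubic, Fintype.sum_sum_type, Sum.elim_inl, Sum.elim_inr, Finset.sum_add_distrib,
    h1, h2, h3]
  module

/-- The diagonal action of `𝔥` commutes with the relative Dirac operator. -/
theorem mul_dirac_comm [CharZero k] (S : ReductivePair B H pp) (F : CliffordFrame B c pp bp bpd)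
    (hr : ∀ a b, r ⁅a, b⁆ = r a * r b - r b * r a)
    (hrc : ∀ a b, r a * c b = c b * r a) {z : g} (hz : z ∈ H) :
    (r z + spinRel pp c bp bpd z) * (∑ i, r (bp i) * c (bpd i)
        + (2 : k) • cubic c bp bpd (fun a b => pp ⁅a, b⁆))
      = (∑ i, r (bp i) * c (bpd i) + (2 : k) • cubic c bp bpd (fun a b => pp ⁅a, b⁆))
        * (r z + spinRel pp c bp bpd z) := by
  have hs : ∀ y, (r z + spinRel pp c bp bpd z) * c y - c y * (r z + spinRel pp c bp bpd z)
      = c (adRel pp z y) := by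
    intro y
    rw [← S.spinRel_comm F, add_mul, mul_add, hrc]; abel
  have hsr := fun a => comm_spinRel (pp := pp) (bp := bp) (bpd := bpd) hrc a z
  have hsr' : ∀ a, (r z + spinRel pp c bp bpd z) * r a - r a * (r z + spinRel pp c bp bpd z)
      = r ⁅z, a⁆ := by
    intro a
    rw [hr, add_mul, mul_add, hsr]; abel
  generalize r z + spinRel pp c bp bpd z = s at hs hsr' ⊢
  have h1 : s * ∑ i, r (bp i) * c (bpd i) = (∑ i, r (bp i) * c (bpd i)) * s := by
    have e : ∀ i, s * (r (bp i) * c (bpd i)) - (r (bp i) * c (bpd i)) * s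
        = r (adRel pp z (bp i)) * c (bpd i) + r (bp i) * c (adRel pp z (bpd i)) := by
      intro i
      rw [adRel_apply, S.stable z hz, F.proj_basis, ← hsr', ← hs]
      noncomm_ring
    have e2 := F.skew (S.adRel_skew z) (S.pp_adRel z) ((LinearMap.mul k R).compl₁₂ r c).flip
    simp only [LinearMap.flip_apply, LinearMap.compl₁₂_apply, LinearMap.mul_apply'] at e2
    rw [← sub_eq_zero, Finset.mul_sum, Finset.sum_mul, ← Finset.sum_sub_distrib]
    simp_rw [e, Finset.sum_add_distrib, e2]
    abel
  have h2 := F.cubic_comm (S.adRel_skew z) (S.pp_adRel z)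
    ((LinearMap.compr₂ (LieModule.toEnd k g g : g →ₗ[k] g →ₗ[k] g) pp).compl₁₂ pp pp) (by
      intro u v
      simp only [LinearMap.compl₁₂_apply, LinearMap.compr₂_apply, LieHom.coe_toLinearMap,
        LieModule.toEnd_apply_apply, F.proj_basis, adRel_apply, S.idem]
      have hd : ∀ w, pp ⁅z, pp w⁆ = pp ⁅z, w⁆ := by
        intro w
        have := S.zero _ (H.lie_mem hz (S.sub_mem w))
        rw [lie_sub, map_sub, sub_eq_zero] at this
        exact this.symm
      have hz' : ∀ u, pp ⁅z, bp u⁆ = ⁅z, bp u⁆ := by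
        intro u
        rw [← F.proj_basis u, S.stable z hz]
      rw [hd, hz', hz', leibniz_lie, map_add]) s hs
  have h3 : cubic c bp bpd (fun a b => ((LinearMap.compr₂ (LieModule.toEnd k g g :
      g →ₗ[k] g →ₗ[k] g) pp).compl₁₂ pp pp) a b) = cubic c bp bpd (fun a b => pp ⁅a, b⁆) := by
    simp [cubic, F.proj_basis]
  rw [h3] at h2
  rw [mul_add s, add_mul _ _ s, h1, mul_smul_comm, smul_mul_assoc, h2]

/-- Vectors of `𝔥` anticommute with the relative Dirac operator, whose Clifford components are odd
elements built from `𝔭`, orthogonal to `𝔥`. -/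
theorem clifford_dirac_anticomm (S : ReductivePair B H pp) (F : CliffordFrame B c pp bp bpd)
    (hrc : ∀ a b, r a * c b = c b * r a) (hbpd : ∀ i, pp (bpd i) = bpd i)
    {z : g} (hz : z ∈ H) :
    c z * (∑ i, r (bp i) * c (bpd i) + (2 : k) • cubic c bp bpd (fun a b => pp ⁅a, b⁆))
      = -((∑ i, r (bp i) * c (bpd i) + (2 : k) • cubic c bp bpd (fun a b => pp ⁅a, b⁆)) * c z) := by
  have h : ∀ a, c z * c (pp a) = -(c (pp a) * c z) := by
    intro a
    rw [F.anticomm z, S.orth hz]; simp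
  have h' : ∀ i, c z * c (bpd i) = -(c (bpd i) * c z) := by
    intro i; rw [← hbpd i, h]
  have h1 : ∀ i, c z * (r (bp i) * c (bpd i)) = -(r (bp i) * c (bpd i) * c z) := by
    intro i
    rw [← mul_assoc, ← hrc, mul_assoc, h', mul_neg, mul_assoc]
  have h2 : ∀ i j a, c z * (c (bpd i) * c (bpd j) * c (pp a))
      = -(c (bpd i) * c (bpd j) * c (pp a) * c z) := by
    intro i j a
    rw [mul_assoc, ← mul_assoc, h', neg_mul, mul_assoc, ← mul_assoc (c z), h', neg_mul, mul_assoc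
      _ (c z), h]
    noncomm_ring
  simp only [mul_add, add_mul, cubic, mul_smul_comm, smul_mul_assoc, Finset.mul_sum,
    Finset.sum_mul, h1, h2, Finset.sum_neg_distrib, smul_neg, neg_add]

theorem diracH_anticomm [CharZero k] (S : ReductivePair B H pp) (F : CliffordFrame B c pp bp bpd)
    (hr : ∀ a b, r ⁅a, b⁆ = r a * r b - r b * r a)
    (hrc : ∀ a b, r a * c b = c b * r a) (hbh : ∀ a, bh a ∈ H)
    (hbhd : ∀ a, bhd a ∈ H) (hbpd : ∀ i, pp (bpd i) = bpd i) :
    (∑ a, (r (bh a) + spinRel pp c bp bpd (bh a)) * c (bhd a) + (2 : k) • gam k c bh bhd)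
      * (∑ i, r (bp i) * c (bpd i) + (2 : k) • cubic c bp bpd (fun a b => pp ⁅a, b⁆))
    = -((∑ i, r (bp i) * c (bpd i) + (2 : k) • cubic c bp bpd (fun a b => pp ⁅a, b⁆))
      * (∑ a, (r (bh a) + spinRel pp c bp bpd (bh a)) * c (bhd a) + (2 : k) • gam k c bh bhd)) := by
  have h1 := fun z (hz : z ∈ H) => S.mul_dirac_comm F hr hrc hz
  have h2 := fun z (hz : z ∈ H) => S.clifford_dirac_anticomm (r := r) F hrc hbpd hz
  set D := ∑ i, r (bp i) * c (bpd i) + (2 : k) • cubic c bp bpd (fun a b => pp ⁅a, b⁆)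
  have h3 : ∀ a, (r (bh a) + spinRel pp c bp bpd (bh a)) * c (bhd a) * D
      = -(D * ((r (bh a) + spinRel pp c bp bpd (bh a)) * c (bhd a))) := by
    intro a
    rw [mul_assoc, h2 _ (hbhd a), mul_neg, ← mul_assoc, h1 _ (hbh a), mul_assoc]
  have h4 : ∀ a b, c (bhd a) * c (bhd b) * c ⁅bh a, bh b⁆ * D
      = -(D * (c (bhd a) * c (bhd b) * c ⁅bh a, bh b⁆)) := by
    intro a b
    rw [mul_assoc, h2 _ (H.lie_mem (hbh a) (hbh b)), mul_neg, mul_assoc, ← mul_assoc (c (bhd b)),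
      h2 _ (hbhd b), neg_mul, mul_neg, neg_neg, mul_assoc, ← mul_assoc, h2 _ (hbhd a)]
    noncomm_ring
  rw [mul_add D, add_mul _ _ D]
  simp only [gam, cubic, mul_smul_comm, smul_mul_assoc, Finset.mul_sum,
    Finset.sum_mul, h3, h4, Finset.sum_neg_distrib, smul_neg, neg_add]

end ReductivePair

/-- The trace in terms of families satisfying the completeness relation for `B`; no linear
independence is needed. -/
theorem trace_eq_sum_dual {k V ι : Type*} [Field k] [AddCommGroup V] [Module k V] [Fintype ι]
    (B : LinearMap.BilinForm k V) (x xd : ι → V) (h : ∀ y, ∑ u, B (xd u) y • x u = y)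
    (T : V →ₗ[k] V) : LinearMap.trace k V T = ∑ u, B (xd u) (T (x u)) := by
  have : Module.Finite k V := by
    refine Module.finite_def.2 (Submodule.fg_def.2 ⟨Set.range x, Set.finite_range x, ?_⟩)
    refine eq_top_iff.2 fun y _ => ?_
    rw [← h y]
    exact Submodule.sum_mem _ fun u _ =>
      Submodule.smul_mem _ _ (Submodule.subset_span (Set.mem_range_self u))
  have hT : T = ∑ u, (B (xd u)).smulRight (T (x u)) := by
    ext y
    conv_lhs => rw [← h y]
    simp
  conv_lhs => rw [hT]
  simp [LinearMap.trace_smulRight]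

/-! ### The enveloping algebra and the square of the relative Dirac operator -/

/-- The canonical map `𝔤 → U(𝔤)` as a plain linear map. -/
noncomputable def envelopingι (k g : Type*) [Field k] [LieRing g] [LieAlgebra k g] :
    g →ₗ[k] UniversalEnvelopingAlgebra k g where
  toFun y := UniversalEnvelopingAlgebra.ι k y
  map_add' := map_add _
  map_smul' := map_smul _

theorem enveloping_map_lie (k : Type*) {g : Type*} [Field k] [LieRing g] [LieAlgebra k g]
    (a b : g) :
    UniversalEnvelopingAlgebra.ι k ⁅a, b⁆
      = UniversalEnvelopingAlgebra.ι k a * UniversalEnvelopingAlgebra.ι k b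
        - UniversalEnvelopingAlgebra.ι k b * UniversalEnvelopingAlgebra.ι k a :=
  letI : LieRing (UniversalEnvelopingAlgebra k g) := LieRing.ofAssociativeRing
  letI : LieAlgebra k (UniversalEnvelopingAlgebra k g) := LieAlgebra.ofAssociativeAlgebra
  (UniversalEnvelopingAlgebra.ι k).map_lie a b

/-- Square of Kostant's cubic Dirac operator: in `A = U(𝔤) ⊗ Cl(𝔤)` one has
`D_{𝔤/𝔥}² = D_𝔤² − (D'_𝔥)²`, and explicitly
`D_{𝔤/𝔥}² = (Σₐ ιU(Z*ₐ) ιU(Zₐ) + Σᵢ ιU(Y*ᵢ) ιU(Yᵢ)) ⊗ 1 − Σₐ ρ'(Z*ₐ) ρ'(Zₐ)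
  + (1/24) (Σᵤ tr_𝔤(ad x*ᵤ ∘ ad xᵤ) − Σₐ tr_𝔥((ad Z*ₐ ∘ ad Zₐ)|_𝔥)) · 1`,
where `ρ'(Z) = ιU(Z) ⊗ 1 + 1 ⊗ ads_𝔭(Z)`. -/
theorem kostant_dirac_squared
    {k : Type*} [Field k] [CharZero k]
    {g : Type*} [LieRing g] [LieAlgebra k g]
    (B : LinearMap.BilinForm k g)
    (hsymm : ∀ X Y : g, B X Y = B Y X)
    (hnondeg : B.Nondegenerate)
    (hinv : ∀ X Y Z : g, B ⁅X, Y⁆ Z = B X ⁅Y, Z⁆)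
    (H : LieSubalgebra k g) (P : Submodule k g)
    (hHnd : ∀ Z ∈ H, (∀ W ∈ H, B Z W = 0) → Z = 0)
    (hP : P = B.orthogonal H.toSubmodule)
    (hcompl : IsCompl H.toSubmodule P)
    (pp : g →ₗ[k] g)
    (hpp_mem : ∀ X : g, pp X ∈ P)
    (hpp_P : ∀ Y ∈ P, pp Y = Y)
    (hpp_H : ∀ Z ∈ H, pp Z = 0)
    {A' : Type*} [Fintype A'] [DecidableEq A']
    (bh : A' → g) (hbh : ∀ a, bh a ∈ H)
    (bhd : A' → g) (hbhd : ∀ a, bhd a ∈ H)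
    (hdualh : ∀ a c, B (bhd a) (bh c) = if a = c then 1 else 0)
    {I : Type*} [Fintype I] [DecidableEq I]
    (bp : I → g) (hbp : ∀ i, bp i ∈ P)
    (bpd : I → g) (hbpd : ∀ i, bpd i ∈ P)
    (hdualp : ∀ i j, B (bpd i) (bp j) = if i = j then 1 else 0)
    (hindep : LinearIndependent k (Sum.elim bh bp))
    (hspan : Submodule.span k (Set.range (Sum.elim bh bp)) = ⊤)
    (hres : ∀ a : A', ∀ x ∈ H.toSubmodule,
      (LieAlgebra.ad k g (bhd a) ∘ₗ LieAlgebra.ad k g (bh a)) x ∈ H.toSubmodule)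
    (Q : QuadraticForm k g) (hQ : ∀ X : g, Q X = B X X)
    (adsp : g → CliffordAlgebra Q)
    (hadsp : ∀ X : g, adsp X = (-(1/4 : k)) • ∑ i, ι Q (bpd i) * ι Q (pp ⁅X, bp i⁆))
    (γg γh γp : CliffordAlgebra Q)
    (hγg : γg = (-(1/24 : k)) • ∑ u : A' ⊕ I, ∑ v : A' ⊕ I,
        ι Q (Sum.elim bhd bpd u) * ι Q (Sum.elim bhd bpd v)
          * ι Q ⁅Sum.elim bh bp u, Sum.elim bh bp v⁆)
    (hγh : γh = (-(1/24 : k)) • ∑ a, ∑ c,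
        ι Q (bhd a) * ι Q (bhd c) * ι Q ⁅bh a, bh c⁆)
    (hγp : γp = (-(1/24 : k)) • ∑ i, ∑ j,
        ι Q (bpd i) * ι Q (bpd j) * ι Q (pp ⁅bp i, bp j⁆))
    (ρ' : g → UniversalEnvelopingAlgebra k g ⊗[k] CliffordAlgebra Q)
    (hρ' : ∀ Z : g, ρ' Z = UniversalEnvelopingAlgebra.ι k Z ⊗ₜ[k] (1 : CliffordAlgebra Q)
        + (1 : UniversalEnvelopingAlgebra k g) ⊗ₜ[k] adsp Z)
    (Dg Dh' Dgh : UniversalEnvelopingAlgebra k g ⊗[k] CliffordAlgebra Q)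
    (hDg : Dg = (∑ u : A' ⊕ I, UniversalEnvelopingAlgebra.ι k (Sum.elim bh bp u)
                  ⊗ₜ[k] ι Q (Sum.elim bhd bpd u))
              + (1 : UniversalEnvelopingAlgebra k g) ⊗ₜ[k] ((2 : k) • γg))
    (hDh' : Dh' = (∑ a, UniversalEnvelopingAlgebra.ι k (bh a) ⊗ₜ[k] ι Q (bhd a))
              + (∑ a, (1 : UniversalEnvelopingAlgebra k g) ⊗ₜ[k] (ι Q (bhd a) * adsp (bh a)))
              + (1 : UniversalEnvelopingAlgebra k g) ⊗ₜ[k] ((2 : k) • γh))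
    (hDgh : Dgh = (∑ i, UniversalEnvelopingAlgebra.ι k (bp i) ⊗ₜ[k] ι Q (bpd i))
              + (1 : UniversalEnvelopingAlgebra k g) ⊗ₜ[k] ((2 : k) • γp)) :
    Dgh * Dgh = Dg * Dg - Dh' * Dh'
    ∧ Dgh * Dgh
      = (∑ a, UniversalEnvelopingAlgebra.ι k (bhd a) * UniversalEnvelopingAlgebra.ι k (bh a)
          + ∑ i, UniversalEnvelopingAlgebra.ι k (bpd i) * UniversalEnvelopingAlgebra.ι k (bp i))
          ⊗ₜ[k] (1 : CliffordAlgebra Q)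
        - (∑ a, ρ' (bhd a) * ρ' (bh a))
        + ((1/24 : k) *
            ((∑ u : A' ⊕ I, LinearMap.trace k g
                (LieAlgebra.ad k g (Sum.elim bhd bpd u) ∘ₗ LieAlgebra.ad k g (Sum.elim bh bp u)))
             - ∑ a, LinearMap.trace k H.toSubmodule
                ((LieAlgebra.ad k g (bhd a) ∘ₗ LieAlgebra.ad k g (bh a)).restrict (hres a))))
          • (1 : UniversalEnvelopingAlgebra k g ⊗[k] CliffordAlgebra Q) := by
  have hPorth : ∀ z ∈ H, ∀ y ∈ P, B z y = 0 := by
    intro z hz y hy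
    rw [hP] at hy
    exact hy z hz
  have hsub : ∀ a, a - pp a ∈ H := by
    intro a
    obtain ⟨z, hz, y, hy, rfl⟩ := Submodule.mem_sup.1
      (show a ∈ H.toSubmodule ⊔ P by rw [hcompl.sup_eq_top]; trivial)
    rw [map_add, hpp_H z hz, hpp_P y hy]
    simpa using hz
  have S : ReductivePair B H pp :=
    { inv := hinv
      idem := fun a => hpp_P _ (hpp_mem a)
      adj := by
        intro a b
        have h1 := hPorth _ (hsub a) _ (hpp_mem b)
        have h2 := hPorth _ (hsub b) _ (hpp_mem a)
        rw [map_sub, LinearMap.sub_apply, sub_eq_zero] at h1 h2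
        rw [h1, hsymm, h2]
        exact hsymm _ _
      zero := hpp_H
      stable := by
        intro z hz a
        refine hpp_P _ ?_
        rw [hP]
        intro w hw
        change B w ⁅z, pp a⁆ = 0
        rw [← hinv]
        exact hPorth _ (H.lie_mem hw hz) _ (hpp_mem a)
      sub_mem := hsub }
  have hcross : ∀ a i, B (bhd a) (bp i) = 0 := fun a i => hPorth _ (hbhd a) _ (hbp i)
  have hcross' : ∀ i a, B (bpd i) (bh a) = 0 := fun i a => by
    rw [hsymm]; exact hPorth _ (hbh a) _ (hbpd i)
  have hexp : ∀ y, ∑ a, B (bhd a) y • bh a + ∑ i, B (bpd i) y • bp i = y := by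
    have : (∑ a, (B (bhd a)).smulRight (bh a) + ∑ i, (B (bpd i)).smulRight (bp i))
        = (LinearMap.id : g →ₗ[k] g) := by
      refine LinearMap.ext_on_range hspan ?_
      rintro (a | i)
      · simp [hdualh, hcross']
      · simp [hdualp, hcross]
    intro y
    simpa using LinearMap.congr_fun this y
  have hexpd : ∀ y, ∑ a, B y (bh a) • bhd a + ∑ i, B y (bp i) • bpd i = y := by
    intro y
    have hw : B (∑ a, B y (bh a) • bhd a + ∑ i, B y (bp i) • bpd i) = B y := by
      refine LinearMap.ext_on_range hspan ?_
      rintro (a | i)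
      · simp [hdualh, hcross']
      · simp [hdualp, hcross]
    rw [← sub_eq_zero]
    refine hnondeg.1 _ fun w => ?_
    rw [map_sub, hw, sub_self, LinearMap.zero_apply]
  let c : g →ₗ[k] UniversalEnvelopingAlgebra k g ⊗[k] CliffordAlgebra Q :=
    Algebra.TensorProduct.includeRight.toLinearMap ∘ₗ ι Q
  let r : g →ₗ[k] UniversalEnvelopingAlgebra k g ⊗[k] CliffordAlgebra Q :=
    Algebra.TensorProduct.includeLeft.toLinearMap ∘ₗ
      envelopingι k g
  have hc : ∀ y, c y = (1 : UniversalEnvelopingAlgebra k g) ⊗ₜ[k] ι Q y := fun _ => rfl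
  have hrdef : ∀ y, r y = UniversalEnvelopingAlgebra.ι k y ⊗ₜ[k] (1 : CliffordAlgebra Q) :=
    fun _ => rfl
  have hcliff : ∀ a b, c a * c b + c b * c a
      = (2 * B a b) • (1 : UniversalEnvelopingAlgebra k g ⊗[k] CliffordAlgebra Q) := by
    intro a b
    simp only [hc, Algebra.TensorProduct.tmul_mul_tmul, one_mul]
    rw [← TensorProduct.tmul_add, ι_mul_ι_add_swap, QuadraticMap.polar, hQ, hQ, hQ,
      Algebra.algebraMap_eq_smul_one, TensorProduct.tmul_smul,
      Algebra.TensorProduct.one_def]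
    congr 1
    simp only [map_add, LinearMap.add_apply]
    rw [hsymm b a]
    ring
  have hrc : ∀ a b, r a * c b = c b * r a := by
    intro a b
    simp [hc, hrdef]
  have hr : ∀ a b, r ⁅a, b⁆ = r a * r b - r b * r a := by
    intro a b
    simp only [hrdef, Algebra.TensorProduct.tmul_mul_tmul, one_mul, enveloping_map_lie,
      TensorProduct.sub_tmul]
  have hppbp : ∀ i, pp (bp i) = bp i := fun i => hpp_P _ (hbp i)
  have hppbpd : ∀ i, pp (bpd i) = bpd i := fun i => hpp_P _ (hbpd i)
  have F : CliffordFrame B c pp bp bpd :=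
    { symm := hsymm
      cliff := hcliff
      expand_dual := by
        intro y
        conv_rhs => rw [← hexpd y]
        simp [hppbpd, hpp_H _ (hbhd _)]
      expand := by
        intro y
        conv_rhs => rw [← hexp y]
        simp [hppbp, hpp_H _ (hbh _)]
      proj_basis := hppbp }
  have Fh : CliffordFrame B c (LinearMap.id - pp) bh bhd :=
    { symm := hsymm
      cliff := hcliff
      expand_dual := by
        intro y
        rw [LinearMap.sub_apply, ← F.expand_dual, eq_sub_iff_add_eq]
        exact hexpd y
      expand := by
        intro y
        rw [LinearMap.sub_apply, ← F.expand, eq_sub_iff_add_eq]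
        exact hexp y
      proj_basis := by intro a; simp [hpp_H _ (hbh a)] }
  have Fg : CliffordFrame B c LinearMap.id (Sum.elim bh bp) (Sum.elim bhd bpd) :=
    { symm := hsymm
      cliff := hcliff
      expand_dual := by intro y; simpa using hexpd y
      expand := by intro y; simpa using hexp y
      proj_basis := fun _ => rfl }
  -- The same frame intrinsically on the Lie algebra `𝔥`, to which `dirac_sq` will be applied.
  let xh : A' → H := fun a => ⟨bh a, hbh a⟩
  let xhd : A' → H := fun a => ⟨bhd a, hbhd a⟩
  let BH : LinearMap.BilinForm k H := B.restrict H.toSubmodule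
  let cH : H →ₗ[k] UniversalEnvelopingAlgebra k g ⊗[k] CliffordAlgebra Q :=
    c ∘ₗ H.toSubmodule.subtype
  have FH : CliffordFrame BH cH LinearMap.id xh xhd :=
    { symm := fun a b => hsymm a b
      cliff := fun a b => hcliff a b
      expand_dual := by
        intro y
        have := Fh.expand_dual y
        apply Subtype.ext
        simp only [LinearMap.sub_apply, hpp_H _ y.2, sub_zero, LinearMap.id_apply] at this ⊢
        rw [← this]
        simp [BH, xh, xhd]
        rfl
      expand := by
        intro y
        have := Fh.expand y
        apply Subtype.ext
        simp only [LinearMap.sub_apply, hpp_H _ y.2, sub_zero, LinearMap.id_apply] at this ⊢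
        rw [← this]
        simp [BH, xh, xhd]
        rfl
      proj_basis := fun _ => rfl }
  have hadsR : ∀ z, (1 : UniversalEnvelopingAlgebra k g) ⊗ₜ[k] adsp z
      = ReductivePair.spinRel pp c bp bpd z := by
    intro z
    rw [hadsp, ReductivePair.spinRel_apply, CliffordFrame.spin]
    simp only [TensorProduct.tmul_smul, TensorProduct.tmul_sum, hc, ReductivePair.adRel_apply,
      hppbp, Algebra.TensorProduct.tmul_mul_tmul, one_mul]
  have hρR : ∀ z, ρ' z = r z + ReductivePair.spinRel pp c bp bpd z := by
    intro z
    rw [hρ', hadsR, hrdef]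
  have hDgR : Dg = ∑ u, r (Sum.elim bh bp u) * c (Sum.elim bhd bpd u)
      + (2 : k) • CliffordFrame.gam k c (Sum.elim bh bp) (Sum.elim bhd bpd) := by
    rw [hDg, hγg, CliffordFrame.gam, CliffordFrame.cubic]
    simp only [TensorProduct.tmul_smul, TensorProduct.tmul_sum, hc, hrdef,
      Algebra.TensorProduct.tmul_mul_tmul, one_mul, mul_one]
  have hDghR : Dgh = ∑ i, r (bp i) * c (bpd i)
      + (2 : k) • CliffordFrame.cubic c bp bpd (fun a b => pp ⁅a, b⁆) := by
    rw [hDgh, hγp, CliffordFrame.cubic]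
    simp only [TensorProduct.tmul_smul, TensorProduct.tmul_sum, hc, hrdef,
      Algebra.TensorProduct.tmul_mul_tmul, one_mul, mul_one]
  have hγhR : (1 : UniversalEnvelopingAlgebra k g) ⊗ₜ[k] γh = CliffordFrame.gam k c bh bhd := by
    rw [hγh, CliffordFrame.gam, CliffordFrame.cubic]
    simp only [TensorProduct.tmul_smul, TensorProduct.tmul_sum, hc,
      Algebra.TensorProduct.tmul_mul_tmul, one_mul]
  have hmulR : ∀ a, (1 : UniversalEnvelopingAlgebra k g) ⊗ₜ[k] (ι Q (bhd a) * adsp (bh a))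
      = c (bhd a) * ReductivePair.spinRel pp c bp bpd (bh a) := by
    intro a
    rw [← hadsR, hc, Algebra.TensorProduct.tmul_mul_tmul, one_mul]
  have hDhR : Dh' = ∑ a, (r (bh a) + ReductivePair.spinRel pp c bp bpd (bh a)) * c (bhd a)
      + (2 : k) • CliffordFrame.gam k c bh bhd := by
    rw [hDh', TensorProduct.tmul_smul, hγhR]
    simp only [hmulR, add_mul, Finset.sum_add_distrib, S.spinRel_comm_mem F _ (hbhd _)]
    simp only [hc, hrdef, Algebra.TensorProduct.tmul_mul_tmul, one_mul, mul_one]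
  have hanti : Dh' * Dgh = -(Dgh * Dh') := by
    rw [hDhR, hDghR]
    exact S.diracH_anticomm F hr hrc hbh hbhd hppbpd
  have hsum : Dg = Dgh + Dh' := by
    rw [hDgR, hDghR, hDhR, S.gam_decomp F Fh hbh hbhd hppbpd, Fintype.sum_sum_type]
    simp only [Sum.elim_inl, Sum.elim_inr, add_mul, Finset.sum_add_distrib,
      S.spinRel_comm_mem F _ (hbhd _)]
    module
  have hfirst : Dgh * Dgh = Dg * Dg - Dh' * Dh' := by
    rw [hsum, add_mul, mul_add, mul_add, hanti]
    abel
  refine ⟨hfirst, ?_⟩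
  have hDg2 := Fg.dirac_sq hinv r hr hrc
  -- On `𝔥`, the diagonal action `r + spinRel` plays the role of `r`: it is a Lie homomorphism
  -- commuting with the Clifford elements of `𝔥`.
  have hDh2 := FH.dirac_sq (fun a b d => hinv a b d)
    ((r + ReductivePair.spinRel pp c bp bpd) ∘ₗ H.toSubmodule.subtype) (by
      intro a b
      have h1 := S.spinRel_lie F a.2 b.2
      have h2 := fun y z => ReductivePair.comm_spinRel (pp := pp) (bp := bp) (bpd := bpd) hrc y z
      change r ⁅(a : g), (b : g)⁆ + ReductivePair.spinRel pp c bp bpd ⁅(a : g), (b : g)⁆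
        = (r a + ReductivePair.spinRel pp c bp bpd a) * (r b + ReductivePair.spinRel pp c bp bpd b)
          - (r b + ReductivePair.spinRel pp c bp bpd b)
            * (r a + ReductivePair.spinRel pp c bp bpd a)
      rw [h1, hr, add_mul, add_mul, mul_add, mul_add, mul_add, mul_add, h2, h2]
      abel) (by
      intro a b
      change (r a + ReductivePair.spinRel pp c bp bpd a) * c b
        = c b * (r a + ReductivePair.spinRel pp c bp bpd a)
      rw [add_mul, mul_add, hrc, S.spinRel_comm_mem F _ b.2])
  have hDh2' : Dh' * Dh' = ∑ a, ρ' (bhd a) * ρ' (bh a)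
      + ((1/24 : k) * ∑ w, ∑ u, BH (xhd u) ⁅xhd w, ⁅xh w, xh u⁆⁆)
        • (1 : UniversalEnvelopingAlgebra k g ⊗[k] CliffordAlgebra Q) := by
    simp_rw [hρR]
    rw [hDhR]
    exact hDh2
  have htg : ∀ u : A' ⊕ I, LinearMap.trace k g
        (LieAlgebra.ad k g (Sum.elim bhd bpd u) ∘ₗ LieAlgebra.ad k g (Sum.elim bh bp u))
      = ∑ v, B (Sum.elim bhd bpd v)
          ⁅Sum.elim bhd bpd u, ⁅Sum.elim bh bp u, Sum.elim bh bp v⁆⁆ := fun u =>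
    trace_eq_sum_dual B (Sum.elim bh bp) (Sum.elim bhd bpd) Fg.expand _
  have hth : ∀ a, LinearMap.trace k H.toSubmodule
        ((LieAlgebra.ad k g (bhd a) ∘ₗ LieAlgebra.ad k g (bh a)).restrict (hres a))
      = ∑ v, BH (xhd v) ⁅xhd a, ⁅xh a, xh v⁆⁆ := fun a =>
    trace_eq_sum_dual (V := H.toSubmodule) BH xh xhd FH.expand _
  have hcas : ∑ u, r (Sum.elim bhd bpd u) * r (Sum.elim bh bp u)
      = (∑ a, UniversalEnvelopingAlgebra.ι k (bhd a) * UniversalEnvelopingAlgebra.ι k (bh a)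
          + ∑ i, UniversalEnvelopingAlgebra.ι k (bpd i) * UniversalEnvelopingAlgebra.ι k (bp i))
          ⊗ₜ[k] (1 : CliffordAlgebra Q) := by
    simp only [Fintype.sum_sum_type, Sum.elim_inl, Sum.elim_inr, hrdef,
      Algebra.TensorProduct.tmul_mul_tmul, mul_one, TensorProduct.add_tmul, TensorProduct.sum_tmul]
  simp_rw [htg, hth]
  rw [hfirst, hDh2', ← hcas, hDgR, hDg2]
  module
end

section
/- Let E be a real inner product space, S a finite set of vectors in E, and λ, μ ∈ E such that ⟨λ, α⟩ > 0 and ⟨μ, α⟩ ≥ 0 for every α ∈ S, and such that λ − μ = Σ_{α∈S} c_α·α for some nonnegative real coefficients c_α. Then ‖μ‖ ≤ ‖λ‖, and ‖μ‖ = ‖λ‖ holds if and only if μ = λ. -/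
open RealInnerProductSpace

/-- Let `E` be a real inner product space, `S` a finite set of vectors, and `lam, mu ∈ E`
with `⟪lam, α⟫ > 0` and `⟪mu, α⟫ ≥ 0` for every `α ∈ S`, such that
`lam - mu = Σ_{α ∈ S} c α • α` with nonnegative coefficients `c α`. Then `‖mu‖ ≤ ‖lam‖`,
with equality if and only if `mu = lam`. -/
theorem norm_le_of_dominant_difference
    {E : Type*} [NormedAddCommGroup E] [InnerProductSpace ℝ E]
    (S : Finset E) (lam mu : E) (c : E → ℝ)
    (hlam : ∀ α ∈ S, 0 < ⟪lam, α⟫)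
    (hmu : ∀ α ∈ S, 0 ≤ ⟪mu, α⟫)
    (hc : ∀ α ∈ S, 0 ≤ c α)
    (hsum : lam - mu = ∑ α ∈ S, c α • α) :
    ‖mu‖ ≤ ‖lam‖ ∧ (‖mu‖ = ‖lam‖ ↔ mu = lam) := by
  have hinner : 0 ≤ ⟪mu, lam - mu⟫ := by
    rw [hsum, inner_sum]
    refine Finset.sum_nonneg fun α hα => ?_
    rw [real_inner_smul_right]
    exact mul_nonneg (hc α hα) (hmu α hα)
  -- Expanding `lam = mu + (lam - mu)`, the norm grows by at least `‖lam - mu‖ ^ 2`.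
  have hexp : ‖lam‖ ^ 2 = ‖mu‖ ^ 2 + 2 * ⟪mu, lam - mu⟫ + ‖lam - mu‖ ^ 2 := by
    rw [← norm_add_sq_real, add_sub_cancel]
  refine ⟨?_, fun h => ?_, fun h => by rw [h]⟩
  · refine abs_le_of_sq_le_sq' ?_ (norm_nonneg lam) |>.2
    nlinarith [sq_nonneg ‖lam - mu‖]
  · rw [h] at hexp
    have hzero : ‖lam - mu‖ ^ 2 = 0 := by
      nlinarith [sq_nonneg ‖lam - mu‖]
    exact (sub_eq_zero.mp (norm_eq_zero.mp (pow_eq_zero_iff two_ne_zero |>.mp hzero))).symm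
end
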